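/- arXiv:2404.04822 — 5 statements merged into one kernel-verified Lean document; each statement's English description precedes it below -/
import Mathlib

section
/- On the responsive domain ℛ, the generalized Top Trading Cycles rule TTC satisfies truncation-proofness (TP): for every responsive profile P, every agent i, and every truncation strategy P'_i ∈ ℛ_i for P_i, TTC_i(P) R_i TTC_i(P'_i, P_{-i}). -/
attribute [local instance] Classical.propDecidable

namespace Realloc

/-- A strict preference over bundles: a strict total order on `Finset O`. -/
structure Pref (O : Type) : Type where
  strict : Finset O → Finset O → Prop
  total : ∀ X Y : Finset O, strict X Y ∨ X = Y ∨ strict Y X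
  irrefl : ∀ X : Finset O, ¬ strict X X
  trans : ∀ X Y Z : Finset O, strict X Y → strict Y Z → strict X Z

/-- The weak ("at least as good as") relation associated with a strict preference. -/
def Pref.weak {O : Type} (p : Pref O) (X Y : Finset O) : Prop :=
  p.strict X Y ∨ X = Y

/-- An allocation: nonempty pairwise disjoint bundles whose union is all of `O`. -/
structure Allocation (N O : Type) : Type where
  bundle : N → Finset O
  nonempty : ∀ i : N, (bundle i).Nonempty
  disj : ∀ i j : N, i ≠ j → ∀ o : O, o ∈ bundle i → o ∉ bundle j
  cover : ∀ o : O, ∃ i : N, o ∈ bundle i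

variable {N O : Type}

/-- Two preferences induce the same marginal (singleton) ranking over objects. -/
def MargEq (p q : Pref O) : Prop :=
  ∀ x y : O, p.strict {x} {y} ↔ q.strict {x} {y}

/-- Responsive preferences. -/
def Responsive [DecidableEq O] (p : Pref O) : Prop :=
  ∀ (X : Finset O) (y z : O), y ∉ X → z ∉ X →
    (p.strict (insert y X) (insert z X) ↔ p.strict {y} {z})

/-- Lexicographic preferences: `X` is preferred to `Y` iff the best object of the
symmetric difference belongs to `X`. -/
def Lexicographic [DecidableEq O] (p : Pref O) : Prop :=
  ∀ X Y : Finset O, X ≠ Y →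
    (p.strict X Y ↔
      ∃ x ∈ X \ Y, ∀ y ∈ (X \ Y) ∪ (Y \ X), y ≠ x → p.strict {x} {y})

/-- Conditionally lexicographic preferences. -/
def CondLex [DecidableEq O] (p : Pref O) : Prop :=
  ∀ X Y : Finset O, Disjoint X Y → X.Nonempty →
    ∃! x : O, x ∈ X ∧ ∀ Z : Finset O, Z ⊆ X.erase x → p.strict (insert x Y) (Y ∪ Z)

/-- Monotonic preferences. -/
def Monot (p : Pref O) : Prop :=
  ∀ X Y : Finset O, Y ⊆ X → p.weak X Y

/-- `p'` is a subset-drop strategy for `p` (relative to endowment `ωi`):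
some set `X ⊆ O ∖ ωi` is moved to the bottom of the marginal ranking, preserving
the relative marginal order within `X` and within its complement. -/
def SubsetDropStrategy (ωi : Finset O) (p p' : Pref O) : Prop :=
  ∃ X : Set O, (∀ x ∈ X, x ∉ ωi) ∧
    (∀ x ∈ X, ∀ y ∈ X, (p.strict {x} {y} ↔ p'.strict {x} {y})) ∧
    (∀ x ∉ X, ∀ y ∉ X, (p.strict {x} {y} ↔ p'.strict {x} {y})) ∧
    (∀ x ∈ X, ∀ y ∉ X, p'.strict {y} {x})

/-- `p'` is a drop strategy for `p`: a single object `x ∉ ωi` is moved to the bottom. -/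
def DropStrategy (ωi : Finset O) (p p' : Pref O) : Prop :=
  ∃ x : O, x ∉ ωi ∧
    (∀ u v : O, u ≠ x → v ≠ x → (p.strict {u} {v} ↔ p'.strict {u} {v})) ∧
    (∀ y : O, y ≠ x → p'.strict {y} {x})

/-- `p'` is a truncation strategy for `p`: the tail set
`{o ∈ O ∖ ωi : {x} R {o}}` (for some object `x`) is moved to the bottom. -/
def TruncationStrategy (ωi : Finset O) (p p' : Pref O) : Prop :=
  ∃ x : O,
    (∀ u v : O, (u ∉ ωi ∧ p.weak {x} {u}) → (v ∉ ωi ∧ p.weak {x} {v}) →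
      (p.strict {u} {v} ↔ p'.strict {u} {v})) ∧
    (∀ u v : O, ¬(u ∉ ωi ∧ p.weak {x} {u}) → ¬(v ∉ ωi ∧ p.weak {x} {v}) →
      (p.strict {u} {v} ↔ p'.strict {u} {v})) ∧
    (∀ u v : O, (u ∉ ωi ∧ p.weak {x} {u}) → ¬(v ∉ ωi ∧ p.weak {x} {v}) →
      p'.strict {v} {u})

/-- There is a Pareto-improving trading cycle at the assignment `μ`:
a cyclic sequence of `k+1 ≥ 1` distinct objects and distinct agents, each object owned
(at `μ`) by its agent, such that every agent on the cycle strictly gains by swapping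
the object she relinquishes for the object she points to. -/
def ParetoImprovingCycleAt [DecidableEq O] (pref : N → Pref O) (μ : N → Finset O) : Prop :=
  ∃ (k : ℕ) (obj : Fin (k + 1) → O) (ag : Fin (k + 1) → N),
    Function.Injective obj ∧ Function.Injective ag ∧
    (∀ ℓ : Fin (k + 1), obj ℓ ∈ μ (ag ℓ)) ∧
    (∀ ℓ : Fin (k + 1),
      (pref (ag ℓ)).strict ((insert (obj (ℓ + 1)) (μ (ag ℓ))).erase (obj ℓ)) (μ (ag ℓ)))

/-- Individual-good efficiency of an assignment at a profile. -/
def IGEat [DecidableEq O] (pref : N → Pref O) (μ : N → Finset O) : Prop :=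
  ¬ ParetoImprovingCycleAt pref μ

/-- `ν` Pareto dominates `μ` at the profile `pref`. -/
def ParetoDominates (pref : N → Pref O) (ν μ : N → Finset O) : Prop :=
  (∀ i, (pref i).weak (ν i) (μ i)) ∧ ∃ j, (pref j).strict (ν j) (μ j)

/-- Pareto efficiency of an assignment at a profile. -/
def ParetoEffAt (pref : N → Pref O) (μ : N → Finset O) : Prop :=
  ∀ ν : Allocation N O, ¬ ParetoDominates pref ν.bundle μ

/-- The marginally most-preferred object of a (nonempty) finite set of objects. -/
noncomputable def Pref.best [Nonempty O] (p : Pref O) (S : Finset O) : O :=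
  if h : ∃ x : O, x ∈ S ∧ ∀ y ∈ S, p.weak {x} {y} then h.choose
  else Classical.arbitrary O

/-- The conditionally most-preferred object of `S` given the already-held bundle `Y`. -/
noncomputable def Pref.cbest [Nonempty O] [DecidableEq O] (p : Pref O) (S Y : Finset O) : O :=
  if h : ∃ x : O, x ∈ S ∧ ∀ Z : Finset O, Z ⊆ S.erase x → p.strict (insert x Y) (Y ∪ Z)
  then h.choose else Classical.arbitrary O

/-- The initial owner of an object. -/
noncomputable def Allocation.owner (ω : Allocation N O) (o : O) : N :=
  (ω.cover o).choose

/-- One pass of the generalized TTC algorithm, with fuel.  At each step every agent points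
to her marginally best remaining object and every remaining object points to its owner;
the objects lying on cycles of this functional graph (the periodic points of `g`) are
traded: the owner of a cycling object receives the object she points to. -/
noncomputable def TTCaux [Nonempty O] [DecidableEq O] (pref : N → Pref O) (own : O → N) :
    ℕ → Finset O → N → Finset O
  | 0, _, _ => ∅
  | fuel + 1, S, i =>
      let g : O → O := fun o => (pref (own o)).best S
      let C : Finset O := S.filter fun o => ∃ k : ℕ, 0 < k ∧ g^[k] o = o
      if S.Nonempty then
        ((C.filter fun o => own o = i).image g) ∪ TTCaux pref own fuel (S \ C) i
      else ∅

/-- The generalized Top Trading Cycles rule: the bundle received by agent `i`. -/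
noncomputable def TTC [Fintype O] [Nonempty O] [DecidableEq O]
    (pref : N → Pref O) (ω : Allocation N O) (i : N) : Finset O :=
  TTCaux pref ω.owner (Fintype.card O + 1) Finset.univ i

/-- One pass of the Augmented TTC algorithm, with fuel: agents point to their
conditionally most-preferred remaining object given the bundle assigned so far. -/
noncomputable def ATTCaux [Nonempty O] [DecidableEq O] (pref : N → Pref O) (own : O → N) :
    ℕ → Finset O → (N → Finset O) → N → Finset O
  | 0, _, μ => μ
  | fuel + 1, S, μ =>
      let g : O → O := fun o => (pref (own o)).cbest S (μ (own o))
      let C : Finset O := S.filter fun o => ∃ k : ℕ, 0 < k ∧ g^[k] o = o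
      if S.Nonempty then
        ATTCaux pref own fuel (S \ C) (fun j => μ j ∪ ((C.filter fun o => own o = j).image g))
      else μ

/-- The Augmented Top Trading Cycles rule: the bundle received by agent `i`. -/
noncomputable def ATTC [Fintype O] [Nonempty O] [DecidableEq O]
    (pref : N → Pref O) (ω : Allocation N O) (i : N) : Finset O :=
  ATTCaux pref ω.owner (Fintype.card O + 1) Finset.univ (fun _ => ∅) i

/-- Conditional marginal preference of `p` given the bundle `Y`:
`x` is conditionally better than `y`. -/
def CMarg [DecidableEq O] (p : Pref O) (Y : Finset O) (x y : O) : Prop :=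
  p.strict ((insert x Y).erase y) ((insert y Y).erase x)

/-- Weak conditional marginal preference. -/
def CMargWeak [DecidableEq O] (p : Pref O) (Y : Finset O) (x y : O) : Prop :=
  CMarg p Y x y ∨ x = y

/-- Drop strategy on the conditionally lexicographic domain: `x ∉ ωi` becomes the worst,
with preferences over bundles avoiding `x` unchanged. -/
def DropStrategyCL (ωi : Finset O) (p p' : Pref O) : Prop :=
  ∃ x : O, x ∉ ωi ∧
    (∀ Y : Finset O, Y.Nonempty → x ∉ Y → p'.strict Y {x}) ∧
    (∀ Y Z : Finset O, x ∉ Y → x ∉ Z → (p'.strict Y Z ↔ p.strict Y Z))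

section Rules

variable [DecidableEq O]

/-- Balancedness of a rule on the domain `D`. -/
def RBAL (D : Pref O → Prop) (ω : Allocation N O)
    (φ : (N → Pref O) → Allocation N O) : Prop :=
  ∀ P : N → Pref O, (∀ i, D (P i)) → ∀ i, ((φ P).bundle i).card = (ω.bundle i).card

/-- Individual-good efficiency of a rule on the domain `D`. -/
def RIGE (D : Pref O → Prop) (φ : (N → Pref O) → Allocation N O) : Prop :=
  ∀ P : N → Pref O, (∀ i, D (P i)) → IGEat P ((φ P).bundle)

/-- Pareto efficiency of a rule on the domain `D`. -/
def RPE (D : Pref O → Prop) (φ : (N → Pref O) → Allocation N O) : Prop :=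
  ∀ P : N → Pref O, (∀ i, D (P i)) → ParetoEffAt P ((φ P).bundle)

/-- Individual rationality of a rule on the domain `D`. -/
def RIR (D : Pref O → Prop) (ω : Allocation N O)
    (φ : (N → Pref O) → Allocation N O) : Prop :=
  ∀ P : N → Pref O, (∀ i, D (P i)) → ∀ i, (P i).weak ((φ P).bundle i) (ω.bundle i)

/-- The worst-endowment lower bound of a rule on the domain `D`: no agent receives an
object marginally worse than the marginally worst object of her endowment. -/
def RWELB (D : Pref O → Prop) (ω : Allocation N O)
    (φ : (N → Pref O) → Allocation N O) : Prop :=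
  ∀ P : N → Pref O, (∀ i, D (P i)) → ∀ i, ∀ o ∈ (φ P).bundle i,
    ∀ w ∈ ω.bundle i, (∀ y ∈ ω.bundle i, (P i).weak {y} {w}) → (P i).weak {o} {w}

/-- Marginality of a rule on the domain `D`. -/
def RMAR (D : Pref O → Prop) (φ : (N → Pref O) → Allocation N O) : Prop :=
  ∀ P P' : N → Pref O, (∀ i, D (P i)) → (∀ i, D (P' i)) →
    (∀ i, MargEq (P i) (P' i)) → ∀ i, (φ P).bundle i = (φ P').bundle i

variable [DecidableEq N]

/-- Truncation-proofness of a rule on the domain `D`. -/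
def RTP (D : Pref O → Prop) (ω : Allocation N O)
    (φ : (N → Pref O) → Allocation N O) : Prop :=
  ∀ P : N → Pref O, (∀ i, D (P i)) → ∀ i : N, ∀ p' : Pref O, D p' →
    TruncationStrategy (ω.bundle i) (P i) p' →
    (P i).weak ((φ P).bundle i) ((φ (Function.update P i p')).bundle i)

/-- Drop strategy-proofness of a rule on the domain `D`. -/
def RDSP (D : Pref O → Prop) (ω : Allocation N O)
    (φ : (N → Pref O) → Allocation N O) : Prop :=
  ∀ P : N → Pref O, (∀ i, D (P i)) → ∀ i : N, ∀ p' : Pref O, D p' →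
    DropStrategy (ω.bundle i) (P i) p' →
    (P i).weak ((φ P).bundle i) ((φ (Function.update P i p')).bundle i)

/-- Subset-drop strategy-proofness of a rule on the domain `D`. -/
def RSDSP (D : Pref O → Prop) (ω : Allocation N O)
    (φ : (N → Pref O) → Allocation N O) : Prop :=
  ∀ P : N → Pref O, (∀ i, D (P i)) → ∀ i : N, ∀ p' : Pref O, D p' →
    SubsetDropStrategy (ω.bundle i) (P i) p' →
    (P i).weak ((φ P).bundle i) ((φ (Function.update P i p')).bundle i)

/-- Worst-endowment lower bound on the conditionally lexicographic domain, formulated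
with conditional marginal preferences. -/
def RWELBCL (D : Pref O → Prop) (ω : Allocation N O)
    (φ : (N → Pref O) → Allocation N O) : Prop :=
  ∀ P : N → Pref O, (∀ i, D (P i)) → ∀ i, ∀ o ∈ (φ P).bundle i,
    ∀ w ∈ ω.bundle i,
      (∀ y ∈ ω.bundle i, CMargWeak (P i) ((φ P).bundle i) y w) →
      CMargWeak (P i) ((φ P).bundle i) o w

/-- Drop strategy-proofness on the conditionally lexicographic domain. -/
def RDSPCL (D : Pref O → Prop) (ω : Allocation N O)
    (φ : (N → Pref O) → Allocation N O) : Prop :=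
  ∀ P : N → Pref O, (∀ i, D (P i)) → ∀ i : N, ∀ p' : Pref O, D p' →
    DropStrategyCL (ω.bundle i) (P i) p' →
    (P i).weak ((φ P).bundle i) ((φ (Function.update P i p')).bundle i)

end Rules

/-- Agent `i`'s opportunity set under TTC when reporting `p`: the set of bundles
she may receive as others' (responsive) reports vary. -/
def Opp [Fintype O] [Nonempty O] [DecidableEq O] (ω : Allocation N O) (i : N)
    (p : Pref O) : Set (Finset O) :=
  {A | ∃ Q : N → Pref O, (∀ j, Responsive (Q j)) ∧ Q i = p ∧ TTC Q ω i = A}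


theorem Pref.weak_trans {O : Type} (p : Pref O) {X Y Z : Finset O} (h1 : p.weak X Y)
    (h2 : p.weak Y Z) : p.weak X Z := by
  rcases h1 with h1 | rfl
  · rcases h2 with h2 | rfl
    · exact Or.inl (p.trans _ _ _ h1 h2)
    · exact Or.inl h1
  · exact h2

theorem Pref.not_strict {O : Type} (p : Pref O) {X Y : Finset O} :
    ¬ p.strict X Y ↔ p.weak Y X := by
  constructor
  · intro h
    rcases p.total X Y with h1 | h1 | h1
    · exact absurd h1 h
    · exact Or.inr h1.symm
    · exact Or.inl h1
  · rintro (h | rfl) h2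
    · exact p.irrefl _ (p.trans _ _ _ h h2)
    · exact p.irrefl _ h2

theorem Pref.weak_antisymm {O : Type} (p : Pref O) {X Y : Finset O} (h1 : p.weak X Y)
    (h2 : p.weak Y X) : X = Y := by
  rcases h1 with h1 | h1
  · exact absurd h1 (p.not_strict.2 h2)
  · exact h1

theorem Pref.exists_best {O : Type} [DecidableEq O] (p : Pref O) (S : Finset O)
    (hS : S.Nonempty) : ∃ x : O, x ∈ S ∧ ∀ y ∈ S, p.weak {x} {y} := by
  induction S using Finset.induction_on with
  | empty => simp at hS
  | insert a S ha ih =>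
    rcases S.eq_empty_or_nonempty with rfl | hne
    · exact ⟨a, by simp, by simp [Pref.weak]⟩
    · obtain ⟨x, hx, hb⟩ := ih hne
      by_cases h : p.strict {a} {x}
      · refine ⟨a, by simp, fun y hy => ?_⟩
        rcases Finset.mem_insert.1 hy with rfl | hy
        · exact Or.inr rfl
        · exact p.weak_trans (Or.inl h) (hb y hy)
      · refine ⟨x, by simp [hx], fun y hy => ?_⟩
        rcases Finset.mem_insert.1 hy with rfl | hy
        · exact p.not_strict.1 h
        · exact hb y hy

theorem Pref.best_spec {O : Type} [Nonempty O] [DecidableEq O] (p : Pref O) (S : Finset O)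
    (hS : S.Nonempty) : p.best S ∈ S ∧ ∀ y ∈ S, p.weak {p.best S} {y} := by
  have h := p.exists_best S hS
  unfold Pref.best
  rw [dif_pos h]
  exact h.choose_spec

theorem Pref.best_eq {O : Type} [Nonempty O] [DecidableEq O] (p : Pref O) (S : Finset O)
    (x : O) (hx : x ∈ S) (hb : ∀ y ∈ S, p.weak {x} {y}) : p.best S = x := by
  obtain ⟨h1, h2⟩ := p.best_spec S ⟨x, hx⟩
  exact Finset.singleton_injective (p.weak_antisymm (h2 x hx) (hb _ h1))

/-- Dominance by an injection. -/
def Dom {O : Type} [DecidableEq O] (p : Pref O) (X Y : Finset O) : Prop :=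
  ∃ f : O → O, Set.InjOn f Y ∧ Y.image f = X ∧ ∀ o ∈ Y, p.weak {f o} {o}

theorem Dom.refl {O : Type} [DecidableEq O] (p : Pref O) (X : Finset O) : Dom p X X :=
  ⟨id, Function.injective_id.injOn, by simp, fun _ _ => Or.inr rfl⟩

theorem Dom.union {O : Type} [DecidableEq O] {p : Pref O} {X Y X' Y' : Finset O}
    (h : Dom p X Y) (h' : Dom p X' Y') (hX : Disjoint X X') (hY : Disjoint Y Y') :
    Dom p (X ∪ X') (Y ∪ Y') := by
  obtain ⟨f, hf, rfl, hw⟩ := h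
  obtain ⟨f', hf', rfl, hw'⟩ := h'
  have e1 : ∀ o ∈ Y, (if o ∈ Y then f o else f' o) = f o := fun o ho => if_pos ho
  have e2 : ∀ o ∈ Y', (if o ∈ Y then f o else f' o) = f' o := fun o ho =>
    if_neg (fun h => Finset.disjoint_left.1 hY h ho)
  refine ⟨fun o => if o ∈ Y then f o else f' o, ?_, ?_, ?_⟩
  · intro a ha b hb hab
    have ha := Finset.mem_union.1 (Finset.mem_coe.1 ha)
    have hb := Finset.mem_union.1 (Finset.mem_coe.1 hb)
    dsimp only at hab
    rcases ha with ha | ha <;> rcases hb with hb | hb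
    · rw [e1 a ha, e1 b hb] at hab; exact hf ha hb hab
    · rw [e1 a ha, e2 b hb] at hab
      exact absurd (hab ▸ Finset.mem_image_of_mem f' hb)
        (Finset.disjoint_left.1 hX (Finset.mem_image_of_mem f ha))
    · rw [e2 a ha, e1 b hb] at hab
      exact absurd (hab ▸ Finset.mem_image_of_mem f' ha)
        (Finset.disjoint_left.1 hX (Finset.mem_image_of_mem f hb))
    · rw [e2 a ha, e2 b hb] at hab; exact hf' ha hb hab
  · rw [Finset.image_union, Finset.image_congr (g := f) (fun o ho => e1 o ho),
      Finset.image_congr (s := Y') (g := f') (fun o ho => e2 o ho)]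
  · intro o ho
    dsimp only
    rcases Finset.mem_union.1 ho with ho | ho
    · rw [e1 o ho]; exact hw o ho
    · rw [e2 o ho]; exact hw' o ho

theorem weak_of_inj {O : Type} [DecidableEq O] (p : Pref O) (hp : Responsive p) (f : O → O) :
    ∀ (n : ℕ) (Y Z : Finset O), Y.card = n → Set.InjOn f Y → (∀ o ∈ Y, p.weak {f o} {o}) →
      Disjoint Z Y → Disjoint Z (Y.image f) → p.weak (Z ∪ Y.image f) (Z ∪ Y) := by
  intro n
  induction n with
  | zero =>
    intro Y Z hc _ _ _ _
    rw [Finset.card_eq_zero] at hc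
    subst hc
    exact Or.inr (by simp)
  | succ n ih =>
    intro Y Z hc hf hw hZ hZf
    have hne : Y.Nonempty := Finset.card_pos.1 (by omega)
    obtain ⟨o, ho, hb⟩ := p.exists_best Y hne
    obtain ⟨Y1, hoY, rfl⟩ : ∃ Y1, o ∉ Y1 ∧ Y = insert o Y1 :=
      ⟨Y.erase o, by simp, (Finset.insert_erase ho).symm⟩
    rw [Finset.card_insert_of_notMem hoY] at hc
    have hfo : f o ∉ Y1 := by
      intro h
      have h1 := hb _ (Finset.mem_insert_of_mem h)
      have h2 := hw o ho
      have := Finset.singleton_injective (p.weak_antisymm h1 h2)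
      exact hoY (this ▸ h)
    have hoZ : o ∉ Z := fun h => Finset.disjoint_left.1 hZ h ho
    have hfZ : f o ∉ Z := fun h => Finset.disjoint_left.1 hZf h (Finset.mem_image_of_mem f ho)
    have key := ih Y1 (insert (f o) Z) (by omega)
      (hf.mono (by simp)) (fun a ha => hw a (Finset.mem_insert_of_mem ha))
      (by
        rw [Finset.disjoint_insert_left]
        exact ⟨hfo, hZ.mono_right (Finset.subset_insert _ _)⟩)
      (by
        rw [Finset.disjoint_insert_left]
        refine ⟨?_, hZf.mono_right (Finset.image_subset_image (Finset.subset_insert _ _))⟩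
        intro h
        obtain ⟨a, ha, hao⟩ := Finset.mem_image.1 h
        have := hf (by simp [ha]) (by simp) hao
        exact hoY (this ▸ ha))
    have e1 : Z ∪ (insert o Y1).image f = insert (f o) Z ∪ Y1.image f := by
      rw [Finset.image_insert, Finset.union_insert, Finset.insert_union]
    rw [e1]
    refine p.weak_trans key ?_
    rw [Finset.insert_union, Finset.union_insert]
    rcases hw o ho with h | h
    · left
      exact (hp (Z ∪ Y1) (f o) o (by simp [hfZ, hfo]) (by simp [hoZ, hoY])).2 h
    · right
      rw [Finset.singleton_injective h]

theorem Dom.weak {O : Type} [DecidableEq O] {p : Pref O} (hp : Responsive p) {X Y : Finset O}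
    (h : Dom p X Y) : p.weak X Y := by
  obtain ⟨f, hf, rfl, hw⟩ := h
  simpa using weak_of_inj p hp f _ Y ∅ rfl hf hw (by simp) (by simp)

/-- pointing map -/
noncomputable def pt {N O : Type} [Nonempty O] (pref : N → Pref O) (own : O → N)
    (S : Finset O) : O → O := fun o => (pref (own o)).best S

/-- cycling objects -/
noncomputable def cyc {N O : Type} [Nonempty O] (pref : N → Pref O) (own : O → N)
    (S : Finset O) : Finset O := S.filter fun o => ∃ k : ℕ, 0 < k ∧ (pt pref own S)^[k] o = o

section
variable {N O : Type} [Nonempty O] [DecidableEq O] (pref : N → Pref O) (own : O → N)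

theorem aux_empty (n : ℕ) (i : N) : TTCaux pref own n ∅ i = ∅ := by
  cases n <;> simp [TTCaux]

theorem aux_succ (n : ℕ) (S : Finset O) (i : N) (hS : S.Nonempty) :
    TTCaux pref own (n + 1) S i =
      ((cyc pref own S).filter fun o => own o = i).image (pt pref own S) ∪
        TTCaux pref own n (S \ cyc pref own S) i := by
  rw [TTCaux]
  simp only [hS, if_true]
  rfl

theorem pt_mem {S : Finset O} (hS : S.Nonempty) (o : O) : pt pref own S o ∈ S :=
  (Pref.best_spec _ S hS).1

theorem cyc_sub (S : Finset O) : cyc pref own S ⊆ S := Finset.filter_subset _ _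

theorem pt_cyc {S : Finset O} {o : O} (ho : o ∈ cyc pref own S) :
    pt pref own S o ∈ cyc pref own S := by
  obtain ⟨h1, k, hk, h⟩ := Finset.mem_filter.1 ho
  refine Finset.mem_filter.2 ⟨pt_mem pref own ⟨o, h1⟩ o, k, hk, ?_⟩
  rw [← Function.iterate_succ_apply, Function.iterate_succ_apply', h]

theorem pt_inj (S : Finset O) : Set.InjOn (pt pref own S) (cyc pref own S) := by
  intro a ha b hb hab
  obtain ⟨_, k, hk, h⟩ := Finset.mem_filter.1 (Finset.mem_coe.1 ha)
  obtain ⟨_, l, hl, h'⟩ := Finset.mem_filter.1 (Finset.mem_coe.1 hb)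
  have e1 : (pt pref own S)^[k * l] a = a := by
    rw [Function.iterate_mul]; exact Function.iterate_fixed h l
  have e2 : (pt pref own S)^[k * l] b = b := by
    rw [mul_comm, Function.iterate_mul]; exact Function.iterate_fixed h' k
  obtain ⟨m, hm⟩ : ∃ m, k * l = m + 1 := ⟨k * l - 1, by have := Nat.mul_pos hk hl; omega⟩
  rw [hm, Function.iterate_succ_apply] at e1 e2
  rw [← e1, ← e2, hab]

theorem cyc_nonempty {S : Finset O} (hS : S.Nonempty) : (cyc pref own S).Nonempty := by
  obtain ⟨o, ho⟩ := hS
  have hm : ∀ k, (pt pref own S)^[k] o ∈ S := by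
    intro k
    cases k with
    | zero => exact ho
    | succ k => rw [Function.iterate_succ_apply']; exact pt_mem pref own ⟨o, ho⟩ _
  obtain ⟨a, _, b, _, hab, h⟩ := Set.infinite_univ.exists_ne_map_eq_of_mapsTo
    (f := fun k : ℕ => (pt pref own S)^[k] o) (s := Set.univ) (t := (S : Set O))
    (fun k _ => hm k) S.finite_toSet
  wlog hlt : a < b generalizing a b
  · exact this b (by trivial) a (by trivial) hab.symm h.symm (by omega)
  refine ⟨(pt pref own S)^[a] o, Finset.mem_filter.2 ⟨hm a, b - a, by omega, ?_⟩⟩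
  rw [← Function.iterate_add_apply, Nat.sub_add_cancel hlt.le]
  exact h.symm

theorem sdiff_card {S : Finset O} {n : ℕ} (hS : S.Nonempty) (h : S.card ≤ n + 1) :
    (S \ cyc pref own S).card ≤ n := by
  have h1 := Finset.card_sdiff_add_card_eq_card (cyc_sub pref own S)
  have h2 := (cyc_nonempty pref own hS).card_pos
  omega

theorem aux_sub (n : ℕ) (i : N) : ∀ S : Finset O, TTCaux pref own n S i ⊆ S := by
  induction n with
  | zero => intro S; simp [TTCaux]
  | succ n ih =>
    intro S
    rcases S.eq_empty_or_nonempty with rfl | hS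
    · rw [aux_empty]
    rw [aux_succ _ _ _ _ _ hS]
    refine Finset.union_subset ?_ ((ih _).trans Finset.sdiff_subset)
    intro a ha
    obtain ⟨b, _, rfl⟩ := Finset.mem_image.1 ha
    exact pt_mem pref own hS b

theorem disj_step (i : N) (S X : Finset O) (hX : X ⊆ S \ cyc pref own S) :
    Disjoint (((cyc pref own S).filter fun o => own o = i).image (pt pref own S)) X := by
  rw [Finset.disjoint_left]
  intro a ha hx
  obtain ⟨b, hb, rfl⟩ := Finset.mem_image.1 ha
  exact (Finset.mem_sdiff.1 (hX hx)).2 (pt_cyc pref own (Finset.mem_filter.1 hb).1)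

theorem filter_split (i : N) (S : Finset O) :
    (S.filter fun o => own o = i) = ((cyc pref own S).filter fun o => own o = i) ∪
      ((S \ cyc pref own S).filter fun o => own o = i) := by
  rw [← Finset.filter_union, Finset.union_sdiff_of_subset (cyc_sub pref own S)]

theorem claim1 (i : N) (n : ℕ) : ∀ S : Finset O, S.card ≤ n →
    Dom (pref i) (TTCaux pref own n S i) (S.filter fun o => own o = i) := by
  induction n with
  | zero =>
    intro S h
    have : S = ∅ := by simpa using h
    subst this
    simpa [aux_empty] using Dom.refl (pref i) ∅
  | succ n ih =>
    intro S h
    rcases S.eq_empty_or_nonempty with rfl | hS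
    · simpa [aux_empty] using Dom.refl (pref i) ∅
    rw [aux_succ _ _ _ _ _ hS, filter_split pref own i S]
    refine Dom.union ⟨pt pref own S, ?_, rfl, ?_⟩ (ih _ (sdiff_card pref own hS h))
      (disj_step pref own i S _ (aux_sub pref own n i _)) ?_
    · exact (pt_inj pref own S).mono (Finset.coe_subset.2 (Finset.filter_subset _ _))
    · intro o ho
      obtain ⟨h1, rfl⟩ := Finset.mem_filter.1 ho
      exact (Pref.best_spec _ S hS).2 o (cyc_sub pref own S h1)
    · exact (Finset.disjoint_sdiff).mono (Finset.filter_subset _ _) (Finset.filter_subset _ _)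

theorem claim0 (i : N) (n : ℕ) : ∀ S : Finset O, S.card ≤ n →
    (∀ u ∈ S, ∀ v ∈ S, own u ≠ i → own v = i → (pref i).strict {v} {u}) →
    TTCaux pref own n S i = (S.filter fun o => own o = i) := by
  induction n with
  | zero =>
    intro S h _
    have : S = ∅ := by simpa using h
    subst this
    simp [aux_empty]
  | succ n ih =>
    intro S h hs
    rcases S.eq_empty_or_nonempty with rfl | hS
    · simp [aux_empty]
    rw [aux_succ _ _ _ _ _ hS, filter_split pref own i S, ih _ (sdiff_card pref own hS h)]
    · congr 1
      have : ∀ o ∈ (cyc pref own S).filter fun o => own o = i, pt pref own S o = o := by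
        intro o ho
        obtain ⟨h1, h2⟩ := Finset.mem_filter.1 ho
        have h3 : own (pt pref own S o) = i := by
          by_contra hne
          have h4 := hs _ (pt_mem pref own hS o) o (cyc_sub pref own S h1) hne h2
          have h5 := (Pref.best_spec (pref (own o)) S hS).2 o (cyc_sub pref own S h1)
          rw [h2] at h5
          refine (pref i).not_strict.2 h5 ?_
          simpa only [pt, h2] using h4
        refine pt_inj pref own S (pt_cyc pref own h1) h1 ?_
        simp only [pt] at h3 ⊢
        rw [h3, h2]
      rw [Finset.image_congr (g := id) (fun o ho => this o ho), Finset.image_id]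
    · intro u hu v hv
      exact hs u (Finset.mem_sdiff.1 hu).1 v (Finset.mem_sdiff.1 hv).1

theorem mainDom (pref' : N → Pref O) (i : N) (hj : ∀ j, j ≠ i → pref' j = pref j) (x : O)
    (hU : ∀ u v : O, (pref i).strict {u} {x} → (pref i).weak {u} {v} →
      (pref' i).weak {u} {v})
    (hL : ∀ u v : O, own u ≠ i → own v = i → ¬ (pref i).strict {u} {x} →
      (pref' i).strict {v} {u}) (n : ℕ) : ∀ S : Finset O, S.card ≤ n →
    Dom (pref i) (TTCaux pref own n S i) (TTCaux pref' own n S i) := by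
  induction n with
  | zero => intro S _; exact Dom.refl _ _
  | succ n ih =>
    intro S h
    by_cases hx : ∃ u ∈ S, (pref i).strict {u} {x}
    · obtain ⟨u, hu, hux⟩ := hx
      have hS : S.Nonempty := ⟨u, hu⟩
      obtain ⟨b1, b2⟩ := (pref i).best_spec S hS
      have hbx : (pref i).strict {(pref i).best S} {x} := by
        rcases b2 u hu with h1 | h1
        · exact (pref i).trans _ _ _ h1 hux
        · rw [h1]; exact hux
      have e1 : (pref' i).best S = (pref i).best S :=
        Pref.best_eq _ _ _ b1 fun y hy => hU _ _ hbx (b2 y hy)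
      have e : pt pref' own S = pt pref own S := by
        funext o
        simp only [pt]
        by_cases ho : own o = i
        · rw [ho, e1]
        · rw [hj _ ho]
      have ec : cyc pref' own S = cyc pref own S := by simp only [cyc, e]
      rw [aux_succ _ _ _ _ _ hS, aux_succ _ _ _ _ _ hS, e, ec]
      exact Dom.union (Dom.refl _ _) (ih _ (sdiff_card pref own hS h))
        (disj_step pref own i S _ (aux_sub pref own n i _))
        (disj_step pref own i S _ (aux_sub pref' own n i _))
    · push Not at hx
      rw [claim0 pref' own i (n + 1) S h
        (fun u hu v hv h1 h2 => hL u v h1 h2 (hx u hu))]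
      exact claim1 pref own i (n + 1) S h

end

theorem owner_iff {N O : Type} (ω : Allocation N O) (o : O) (i : N) :
    ω.owner o = i ↔ o ∈ ω.bundle i := by
  have h : o ∈ ω.bundle (ω.owner o) := (ω.cover o).choose_spec
  constructor
  · rintro rfl; exact h
  · intro h2
    by_contra hne
    exact ω.disj _ _ hne o h h2

/-- On the responsive domain, TTC satisfies truncation-proofness. -/
theorem stmt6 {N O : Type} [Fintype N] [Fintype O] [DecidableEq N] [DecidableEq O] [Nonempty O]
    (hN : 2 ≤ Fintype.card N) (hNO : Fintype.card N ≤ Fintype.card O)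
    (ω : Allocation N O) :
    ∀ P : N → Pref O, (∀ i, Responsive (P i)) → ∀ i : N, ∀ p' : Pref O, Responsive p' →
      TruncationStrategy (ω.bundle i) (P i) p' →
      (P i).weak (TTC P ω i) (TTC (Function.update P i p') ω i) := by
  intro P hP i p' hp' ⟨x, h1, h2, h3⟩
  refine Dom.weak (hP i) (mainDom P ω.owner (Function.update P i p') i
    (fun j hj => Function.update_of_ne hj _ _) x ?_ ?_ _ _ (by simp))
  · intro u v hu huv
    rw [Function.update_self]
    have hnu : ¬(u ∉ ω.bundle i ∧ (P i).weak {x} {u}) := fun h => (P i).not_strict.2 h.2 hu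
    by_cases hv : v ∉ ω.bundle i ∧ (P i).weak {x} {v}
    · exact Or.inl (h3 v u hv hnu)
    · rcases huv with huv | huv
      · exact Or.inl ((h2 u v hnu hv).1 huv)
      · exact Or.inr huv
  · intro u v hu hv hux
    rw [Function.update_self]
    rw [ne_eq, owner_iff] at hu
    rw [owner_iff] at hv
    exact h3 u v ⟨hu, (P i).not_strict.1 hux⟩ (fun h => h.1 hv)


end Realloc
end

section
/- On the responsive domain ℛ, every marginal rule satisfying the worst-endowment lower bound (WELB) and truncation-proofness (TP) also satisfies balancedness (BAL). -/
attribute [local instance] Classical.propDecidable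

namespace Realloc

variable {N O : Type}

/-- Preference: fewer objects first, then binary weights given by the ranking `r`. -/
noncomputable def mkPref {O : Type} (r : O → ℕ) (hr : Function.Injective r) : Pref O where
  strict X Y := X.card < Y.card ∨ (X.card = Y.card ∧ ∑ o ∈ Y, 2 ^ r o < ∑ o ∈ X, 2 ^ r o)
  total X Y := by
    rcases lt_trichotomy X.card Y.card with h | h | h
    · exact Or.inl (Or.inl h)
    · rcases lt_trichotomy (∑ o ∈ X, 2 ^ r o) (∑ o ∈ Y, 2 ^ r o) with h' | h' | h'
      · exact Or.inr (Or.inr (Or.inr ⟨h.symm, h'⟩))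
      · refine Or.inr (Or.inl ?_)
        have := @Finset.geomSum_injective 2 le_rfl (X.map ⟨r, hr⟩) (Y.map ⟨r, hr⟩)
          (by simpa using h')
        exact Finset.map_injective _ this
      · exact Or.inl (Or.inr ⟨h, h'⟩)
    · exact Or.inr (Or.inr (Or.inl h))
  irrefl X := by simp
  trans X Y Z := by omega

theorem mkPref_marg {O : Type} (r : O → ℕ) (hr : Function.Injective r) (x y : O) :
    (mkPref r hr).strict {x} {y} ↔ r y < r x := by
  simp [mkPref]
  exact Nat.pow_lt_pow_iff_right one_lt_two

theorem mkPref_resp {O : Type} [DecidableEq O] (r : O → ℕ) (hr : Function.Injective r) :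
    Responsive (mkPref r hr) := by
  intro X y z hy hz
  rw [mkPref_marg]
  simp [mkPref, Finset.card_insert_of_notMem, Finset.sum_insert, hy, hz]
  exact Nat.pow_lt_pow_iff_right one_lt_two

theorem exists_rank {O : Type} [Fintype O] (p : Pref O) :
    ∃ r : O → ℕ, Function.Injective r ∧ (∀ x y, p.strict {x} {y} ↔ r y < r x) ∧
      ∀ x, r x ≤ Fintype.card O := by
  have key : ∀ x y : O, p.strict {x} {y} →
      (Finset.univ.filter fun z => p.strict {y} {z}).card <
        (Finset.univ.filter fun z => p.strict {x} {z}).card := by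
    intro x y h
    apply Finset.card_lt_card
    rw [Finset.ssubset_iff_of_subset]
    · exact ⟨y, by simpa using h, by simpa using p.irrefl {y}⟩
    · intro z hz
      simp only [Finset.mem_filter, Finset.mem_univ, true_and] at hz ⊢
      exact p.trans _ _ _ h hz
  refine ⟨fun x => (Finset.univ.filter fun z => p.strict {x} {z}).card, ?_, ?_, ?_⟩
  · intro x y hxy
    rcases p.total {x} {y} with h | h | h
    · exact absurd hxy (key _ _ h).ne'
    · simpa using h
    · exact absurd hxy (key _ _ h).ne
  · intro x y
    refine ⟨key x y, fun hlt => ?_⟩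
    rcases p.total {x} {y} with h | h | h
    · exact h
    · have : x = y := by simpa using h
      subst this
      exact absurd hlt (lt_irrefl _)
    · exact absurd hlt (key _ _ h).not_gt
  · intro x
    exact Finset.card_le_univ _

theorem alloc_card {N O : Type} [Fintype N] [Fintype O] [DecidableEq O] (μ : Allocation N O) :
    ∑ i, (μ.bundle i).card = Fintype.card O := by
  rw [← Finset.card_biUnion, ← Finset.card_univ]
  · congr 1
    ext o
    simpa using μ.cover o
  · intro i _ j _ hij
    exact Finset.disjoint_left.2 fun o => μ.disj i j hij o

theorem card_le {N O : Type} [Fintype O] [DecidableEq N] [DecidableEq O]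
    (ω : Allocation N O) (φ : (N → Pref O) → Allocation N O)
    (hMAR : RMAR Responsive φ) (hWELB : RWELB Responsive ω φ)
    (hTP : RTP Responsive ω φ) (P : N → Pref O) (hP : ∀ i, Responsive (P i)) (i : N) :
    ((φ P).bundle i).card ≤ (ω.bundle i).card := by
  obtain ⟨r, hr, hrp, hrb⟩ := exists_rank (P i)
  have hq : ∀ x y : O, (mkPref r hr).weak {x} {y} ↔ r y ≤ r x := by
    intro x y
    rw [Pref.weak, mkPref_marg, le_iff_lt_or_eq, Finset.singleton_inj, hr.eq_iff, eq_comm (a := x)]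
  let r' : O → ℕ := fun o => if o ∈ ω.bundle i then r o + (Fintype.card O + 1) else r o
  have hr' : Function.Injective r' := by
    intro x y h
    apply hr
    have := hrb x
    have := hrb y
    simp only [r'] at h
    split_ifs at h <;> omega
  let Q : N → Pref O := Function.update P i (mkPref r hr)
  have hQi : Q i = mkPref r hr := Function.update_self ..
  have hQ : ∀ j, Responsive (Q j) := by
    intro j
    by_cases hj : j = i
    · subst hj; rw [hQi]; exact mkPref_resp r hr
    · simp only [Q, Function.update_of_ne hj]; exact hP j
  have e1 : (φ P).bundle i = (φ Q).bundle i := by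
    apply hMAR P Q hP hQ
    intro j x y
    by_cases hj : j = i
    · subst hj; rw [hQi, mkPref_marg]; exact hrp x y
    · simp only [Q, Function.update_of_ne hj]
  let T : N → Pref O := Function.update Q i (mkPref r' hr')
  have hTi : T i = mkPref r' hr' := Function.update_self ..
  have hT : ∀ j, Responsive (T j) := by
    intro j
    by_cases hj : j = i
    · subst hj; rw [hTi]; exact mkPref_resp r' hr'
    · simp only [T, Function.update_of_ne hj]; exact hQ j
  have htp : (Q i).weak ((φ Q).bundle i) ((φ T).bundle i) := by
    apply hTP Q hQ i _ (mkPref_resp r' hr')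
    obtain ⟨o, -⟩ := ω.nonempty i
    obtain ⟨x, -, hx⟩ := Finset.exists_max_image Finset.univ r ⟨o, Finset.mem_univ o⟩
    refine ⟨x, ?_⟩
    have hx' : ∀ u, r u ≤ r x := fun u => hx u (Finset.mem_univ u)
    simp only [hQi, hq, mkPref_marg, hx', and_true, not_not]
    refine ⟨?_, ?_, ?_⟩
    · intro u v hu hv; simp [r', hu, hv]
    · intro u v hu hv; simp [r', hu, hv]
    · intro u v hu hv
      have := hrb u
      simp only [r', hu, hv, if_true, if_false]
      omega
  have hc : ((φ Q).bundle i).card ≤ ((φ T).bundle i).card := by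
    rw [hQi] at htp
    rcases htp with h | h
    · rcases h with h | h
      · exact h.le
      · exact h.1.le
    · rw [h]
  have hsub : (φ T).bundle i ⊆ ω.bundle i := by
    intro o ho
    obtain ⟨w, hw, hmin⟩ := Finset.exists_min_image (ω.bundle i) r' (ω.nonempty i)
    have h := hWELB T hT i o ho w hw (by
      intro y hy
      rw [hTi, Pref.weak, mkPref_marg]
      rcases (hmin y hy).lt_or_eq with h | h
      · exact Or.inl h
      · exact Or.inr (by rw [hr' h]))
    rw [hTi, Pref.weak, mkPref_marg] at h
    rcases h with h | h
    · by_contra hno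
      have := hrb o
      simp only [r', hw, hno, if_true, if_false] at h
      omega
    · have : o = w := by simpa using h
      rw [this]; exact hw
  rw [e1]
  exact hc.trans (Finset.card_le_card hsub)

/-- On the responsive domain, every marginal rule satisfying WELB and TP
also satisfies BAL. -/
theorem stmt7 {N O : Type} [Fintype N] [Fintype O] [DecidableEq N] [DecidableEq O]
    (hN : 2 ≤ Fintype.card N) (hNO : Fintype.card N ≤ Fintype.card O)
    (ω : Allocation N O) (φ : (N → Pref O) → Allocation N O)
    (hMAR : RMAR Responsive φ) (hWELB : RWELB Responsive ω φ)
    (hTP : RTP Responsive ω φ) :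
    RBAL Responsive ω φ := by
  intro P hP i
  have hle : ∀ j ∈ Finset.univ, ((φ P).bundle j).card ≤ (ω.bundle j).card :=
    fun j _ => card_le ω φ hMAR hWELB hTP P hP j
  have hs : ∑ j, ((φ P).bundle j).card = ∑ j, (ω.bundle j).card := by
    rw [alloc_card, alloc_card]
  exact (Finset.sum_eq_sum_iff_of_le hle).1 hs i (Finset.mem_univ i)

end Realloc
end

section
/- In the single-object environment (the Shapley–Scarf housing market), a rule satisfies Pareto efficiency (PE), individual rationality (IR), and truncation-proofness (TP) if and only if it equals the Top Trading Cycles rule TTC. -/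
attribute [local instance] Classical.propDecidable

namespace Housing

/-- A strict linear order on objects (identified with agents: agent `i` owns object `i`). -/
structure SPref (A : Type) : Type where
  strict : A → A → Prop
  total : ∀ x y : A, strict x y ∨ x = y ∨ strict y x
  irrefl : ∀ x : A, ¬ strict x x
  trans : ∀ x y z : A, strict x y → strict y z → strict x z

/-- The weak relation associated with a strict preference. -/
def SPref.weak {A : Type} (p : SPref A) (x y : A) : Prop :=
  p.strict x y ∨ x = y

variable {N : Type}

/-- The most-preferred object of a (nonempty) finite set. -/
noncomputable def sbest [Nonempty N] (p : SPref N) (S : Finset N) : N :=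
  if h : ∃ x : N, x ∈ S ∧ ∀ y ∈ S, p.weak x y then h.choose
  else Classical.arbitrary N

/-- The Top Trading Cycles algorithm with fuel in the single-object (housing market)
environment, where objects are identified with their owners: at each step, every agent
points to her most-preferred remaining object; agents whose object lies on a cycle of
this functional graph trade and are removed. -/
noncomputable def TTC1aux [Nonempty N] [DecidableEq N] (pref : N → SPref N) :
    ℕ → Finset N → N → N
  | 0, _, i => i
  | fuel + 1, S, i =>
      let g : N → N := fun o => sbest (pref o) S
      let C : Finset N := S.filter fun o => ∃ k : ℕ, 0 < k ∧ g^[k] o = o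
      if i ∈ C then g i else TTC1aux pref fuel (S \ C) i

/-- The Top Trading Cycles rule in the housing market. -/
noncomputable def TTC1 [Fintype N] [Nonempty N] [DecidableEq N]
    (pref : N → SPref N) (i : N) : N :=
  TTC1aux pref (Fintype.card N + 1) Finset.univ i

/-- Pareto efficiency of a rule: no (bijective) allocation Pareto dominates its outcome. -/
def PE1 (φ : (N → SPref N) → N → N) : Prop :=
  ∀ P : N → SPref N, ∀ ν : N → N, Function.Bijective ν →
    ¬ ((∀ i, (P i).weak (ν i) (φ P i)) ∧ ∃ j, (P j).strict (ν j) (φ P j))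

/-- Individual rationality: every agent weakly prefers her assignment to her endowment. -/
def IR1 (φ : (N → SPref N) → N → N) : Prop :=
  ∀ P : N → SPref N, ∀ i : N, (P i).weak (φ P i) i

/-- `p'` is a truncation strategy for `p` for agent `i` (whose endowment is object `i`):
the tail set `{o ≠ i : x R o}` (for some object `x`) is moved to the bottom, preserving
the relative order within the set and within its complement. -/
def Trunc1 (i : N) (p p' : SPref N) : Prop :=
  ∃ x : N,
    (∀ u v : N, (u ≠ i ∧ p.weak x u) → (v ≠ i ∧ p.weak x v) →
      (p.strict u v ↔ p'.strict u v)) ∧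
    (∀ u v : N, ¬(u ≠ i ∧ p.weak x u) → ¬(v ≠ i ∧ p.weak x v) →
      (p.strict u v ↔ p'.strict u v)) ∧
    (∀ u v : N, (u ≠ i ∧ p.weak x u) → ¬(v ≠ i ∧ p.weak x v) → p'.strict v u)

/-- Truncation-proofness. -/
def TP1 [DecidableEq N] (φ : (N → SPref N) → N → N) : Prop :=
  ∀ P : N → SPref N, ∀ i : N, ∀ p' : SPref N, Trunc1 i (P i) p' →
    (P i).weak (φ P i) (φ (Function.update P i p') i)

theorem SPref.not_both {A : Type} (p : SPref A) {x y : A} (h : p.strict x y) (h' : p.weak y x) :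
    False := by
  rcases h' with h' | h'
  · exact p.irrefl _ (p.trans _ _ _ h h')
  · subst h'; exact p.irrefl _ h

theorem SPref.weak_of_not {A : Type} (p : SPref A) {x y : A} (h : ¬ p.strict x y) :
    p.weak y x := by
  rcases p.total x y with h' | h' | h'
  · exact absurd h' h
  · exact Or.inr h'.symm
  · exact Or.inl h'

theorem SPref.weak_trans {A : Type} (p : SPref A) {x y z : A} (h : p.weak x y)
    (h' : p.weak y z) : p.weak x z := by
  rcases h with h | h
  · rcases h' with h' | h'
    · exact Or.inl (p.trans _ _ _ h h')
    · subst h'; exact Or.inl h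
  · subst h; exact h'

/-- `x` is a layered (top trading cycles) allocation with layers given by `r`. -/
structure Valid (P : N → SPref N) (x : N → N) (r : N → ℕ) : Prop where
  inj : Function.Injective x
  lay : ∀ i, r (x i) = r i
  top : ∀ i o, r i ≤ r o → (P i).weak (x i) o

theorem Valid.above [Finite N] {P : N → SPref N} {x : N → N} {r : N → ℕ} (h : Valid P x r)
    {y : N → N} (hy : Function.Injective y) {k : ℕ} (hk : ∀ j, r j < k → y j = x j)
    {i : N} (hi : k ≤ r i) : k ≤ r (y i) := by
  by_contra hlt
  push Not at hlt
  obtain ⟨j, hj⟩ := (Finite.injective_iff_surjective.1 h.inj) (y i)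
  have hrj : r j < k := by rw [← h.lay j, hj]; exact hlt
  have := hy ((hk j hrj).trans hj)
  subst this
  omega

theorem Valid.uniq [Finite N] {P P' : N → SPref N} {x x' : N → N} {r r' : N → ℕ}
    (h : Valid P x r) (h' : Valid P' x' r') (K : ℕ) (hP : ∀ i, r i < K → P i = P' i) :
    ∀ i, r i < K → x' i = x i := by
  suffices H : ∀ k, k ≤ K → ∀ i, r i < k → x' i = x i from H K le_rfl
  intro k
  induction k with
  | zero => intro _ i hi; omega
  | succ k ih =>
    intro hk i hi
    have ih' := ih (by omega)
    by_contra hne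
    have hex : ∃ n, ∃ j, r j = k ∧ x' j ≠ x j ∧ r' j = n := by
      refine ⟨_, i, ?_, hne, rfl⟩
      by_contra h1
      exact hne (ih' i (by omega))
    obtain ⟨j, hjk, hjne, hjn⟩ := Nat.find_spec hex
    have hmin : ∀ l, r l = k → r' l < r' j → x' l = x l := by
      intro l hl hlj
      by_contra h2
      exact Nat.find_min hex (m := r' l) (by omega) ⟨l, hl, h2, rfl⟩
    have hs : (P j).strict (x j) (x' j) := by
      rcases h.top j (x' j) (by rw [hjk]; exact h.above h'.inj ih' hjk.ge) with h3 | h3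
      · exact h3
      · exact absurd h3.symm hjne
    have hlt : r' (x j) < r' j := by
      by_contra h4
      have := h'.top j (x j) (by omega)
      rw [← hP j (by omega)] at this
      exact (P j).not_both hs this
    have horb : ∀ m, r (x^[m + 1] j) = k ∧ r' (x^[m + 1] j) < r' j := by
      intro m
      induction m with
      | zero => exact ⟨by simpa [h.lay] using hjk, by simpa using hlt⟩
      | succ m ihm =>
        rw [Function.iterate_succ_apply']
        refine ⟨by rw [h.lay]; exact ihm.1, ?_⟩
        rw [← hmin _ ihm.1 ihm.2, h'.lay]
        exact ihm.2
    obtain ⟨n, hn, hper⟩ := Function.mem_periodicPts.1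
      (h.inj.mem_periodicPts j)
    obtain ⟨m, rfl⟩ : ∃ m, n = m + 1 := ⟨n - 1, by omega⟩
    have := (horb m).2
    rw [hper.eq] at this
    omega

theorem Valid.pe [Finite N] {P : N → SPref N} {x : N → N} {r : N → ℕ} (h : Valid P x r)
    {ν : N → N} (hν : Function.Injective ν) (hw : ∀ i, (P i).weak (ν i) (x i)) :
    ∀ i, ν i = x i := by
  have H : ∀ k, ∀ i, r i < k → ν i = x i := by
    intro k
    induction k with
    | zero => intro i hi; omega
    | succ k ih =>
      intro i hi
      by_cases hlt : r i < k
      · exact ih i hlt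
      have h1 := h.top i (ν i) (by have := h.above hν ih (i := i) (by omega); omega)
      rcases hw i with h2 | h2
      · exact ((P i).not_both h2 h1).elim
      · exact h2
  exact fun i => H _ i (Nat.lt_succ_self _)

theorem sbest_spec [Nonempty N] (p : SPref N) (S : Finset N) (hS : S.Nonempty) :
    sbest p S ∈ S ∧ ∀ y ∈ S, p.weak (sbest p S) y := by
  have hex : ∃ x : N, x ∈ S ∧ ∀ y ∈ S, p.weak x y := by
    induction hS using Finset.Nonempty.cons_induction with
    | singleton a => exact ⟨a, by simp, fun y hy => Or.inr (Finset.mem_singleton.1 hy).symm⟩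
    | cons a s ha hs ih =>
      obtain ⟨x, hx, hbest⟩ := ih
      by_cases hax : p.strict a x
      · refine ⟨a, by simp, fun y hy => ?_⟩
        rcases Finset.mem_cons.1 hy with rfl | hy
        · exact Or.inr rfl
        · exact p.weak_trans (Or.inl hax) (hbest y hy)
      · refine ⟨x, by simp [hx], fun y hy => ?_⟩
        rcases Finset.mem_cons.1 hy with rfl | hy
        · exact p.weak_of_not hax
        · exact hbest y hy
  unfold sbest
  rw [dif_pos hex]
  exact hex.choose_spec

theorem TTC1aux_spec [Finite N] [Nonempty N] [DecidableEq N] (P : N → SPref N) (fuel : ℕ) :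
    ∀ S : Finset N, S.card ≤ fuel → ∃ r : N → ℕ,
      (∀ i ∈ S, TTC1aux P fuel S i ∈ S) ∧
      (∀ i ∈ S, ∀ j ∈ S, TTC1aux P fuel S i = TTC1aux P fuel S j → i = j) ∧
      (∀ i ∈ S, r (TTC1aux P fuel S i) = r i) ∧
      (∀ i ∈ S, ∀ o ∈ S, r i ≤ r o → (P i).weak (TTC1aux P fuel S i) o) := by
  induction fuel with
  | zero =>
    intro S hS
    have : S = ∅ := by simpa using hS
    subst this
    exact ⟨fun _ => 0, by simp⟩
  | succ fuel ih =>
    intro S hS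
    rcases S.eq_empty_or_nonempty with rfl | hne
    · exact ⟨fun _ => 0, by simp⟩
    obtain ⟨g, hg⟩ : ∃ g : N → N, g = fun o => sbest (P o) S := ⟨_, rfl⟩
    obtain ⟨C, hC⟩ : ∃ C : Finset N, C = S.filter fun o => ∃ k : ℕ, 0 < k ∧ g^[k] o = o :=
      ⟨_, rfl⟩
    have hstep : ∀ i, TTC1aux P (fuel + 1) S i =
        if i ∈ C then g i else TTC1aux P fuel (S \ C) i := by
      intro i; subst hC; subst hg; rfl
    have hgS : ∀ i, g i ∈ S := fun i => by rw [hg]; exact (sbest_spec (P i) S hne).1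
    have hgb : ∀ i, ∀ o ∈ S, (P i).weak (g i) o := fun i => by
      rw [hg]; exact (sbest_spec (P i) S hne).2
    have hmemC : ∀ o, o ∈ C ↔ o ∈ S ∧ o ∈ Function.periodicPts g := by
      intro o; rw [hC, Finset.mem_filter]; rfl
    have hCS : C ⊆ S := fun o ho => ((hmemC o).1 ho).1
    have hgC : ∀ i ∈ C, g i ∈ C := fun i hi =>
      (hmemC _).2 ⟨hgS i, (Function.bijOn_periodicPts g).mapsTo ((hmemC i).1 hi).2⟩
    have hginj : ∀ i ∈ C, ∀ j ∈ C, g i = g j → i = j := fun i hi j hj hij =>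
      (Function.bijOn_periodicPts g).injOn ((hmemC i).1 hi).2 ((hmemC j).1 hj).2 hij
    have hCne : C.Nonempty := by
      obtain ⟨s, hs⟩ := hne
      obtain ⟨a, b, hab, heq⟩ := Finite.exists_ne_map_eq_of_infinite (fun n : ℕ => g^[n] s)
      have key : ∀ a b : ℕ, a < b → g^[a] s = g^[b] s → C.Nonempty := by
        intro a b hab heq
        refine ⟨g^[a] s, (hmemC _).2 ⟨?_, ?_⟩⟩
        · cases a with
          | zero => exact hs
          | succ a => rw [Function.iterate_succ_apply']; exact hgS _
        · refine Function.mem_periodicPts.2 ⟨b - a, by omega, ?_⟩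
          change g^[b - a] (g^[a] s) = g^[a] s
          rw [← Function.iterate_add_apply, Nat.sub_add_cancel hab.le]
          exact heq.symm
      rcases lt_or_gt_of_ne hab with h | h
      · exact key a b h heq
      · exact key b a h heq.symm
    have hcard : (S \ C).card ≤ fuel := by
      have := Finset.card_sdiff_add_card_eq_card hCS
      have := hCne.card_pos
      omega
    obtain ⟨r, h1, h2, h3, h4⟩ := ih (S \ C) hcard
    have hin : ∀ i ∈ C, TTC1aux P (fuel + 1) S i = g i := fun i hi => by rw [hstep, if_pos hi]
    have hout : ∀ i, i ∉ C → TTC1aux P (fuel + 1) S i = TTC1aux P fuel (S \ C) i :=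
      fun i hi => by rw [hstep, if_neg hi]
    have h1' : ∀ i ∈ S, i ∉ C → TTC1aux P fuel (S \ C) i ∉ C := fun i hi hiC =>
      (Finset.mem_sdiff.1 (h1 i (Finset.mem_sdiff.2 ⟨hi, hiC⟩))).2
    refine ⟨fun i => if i ∈ C then 0 else r i + 1, ?_, ?_, ?_, ?_⟩
    · intro i hi
      by_cases hiC : i ∈ C
      · rw [hin i hiC]; exact hgS i
      · rw [hout i hiC]
        exact (Finset.mem_sdiff.1 (h1 i (Finset.mem_sdiff.2 ⟨hi, hiC⟩))).1
    · intro i hi j hj hij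
      by_cases hiC : i ∈ C <;> by_cases hjC : j ∈ C
      · rw [hin i hiC, hin j hjC] at hij; exact hginj i hiC j hjC hij
      · rw [hin i hiC, hout j hjC] at hij
        exact absurd (hij ▸ hgC i hiC) (h1' j hj hjC)
      · rw [hout i hiC, hin j hjC] at hij
        exact absurd (hij ▸ hgC j hjC) (h1' i hi hiC)
      · rw [hout i hiC, hout j hjC] at hij
        exact h2 i (Finset.mem_sdiff.2 ⟨hi, hiC⟩) j (Finset.mem_sdiff.2 ⟨hj, hjC⟩) hij
    · intro i hi
      by_cases hiC : i ∈ C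
      · rw [hin i hiC]; simp only [if_pos (hgC i hiC), if_pos hiC]
      · rw [hout i hiC]
        simp only [if_neg hiC, if_neg (h1' i hi hiC), h3 i (Finset.mem_sdiff.2 ⟨hi, hiC⟩)]
    · intro i hi o ho hio
      by_cases hiC : i ∈ C
      · rw [hin i hiC]; exact hgb i o ho
      · rw [hout i hiC]
        by_cases hoC : o ∈ C
        · simp only [if_neg hiC, if_pos hoC] at hio; omega
        · simp only [if_neg hiC, if_neg hoC] at hio
          exact h4 i (Finset.mem_sdiff.2 ⟨hi, hiC⟩) o (Finset.mem_sdiff.2 ⟨ho, hoC⟩) (by omega)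

theorem TTC1_valid [Fintype N] [Nonempty N] [DecidableEq N] (P : N → SPref N) :
    ∃ r, Valid P (TTC1 P) r := by
  obtain ⟨r, _, h2, h3, h4⟩ := TTC1aux_spec P (Fintype.card N + 1) Finset.univ
    (by rw [Finset.card_univ]; omega)
  exact ⟨r, fun i j h => h2 i (by simp) j (by simp) h, fun i => h3 i (by simp),
    fun i o h => h4 i (by simp) o (by simp) h⟩

/-- Move the set `T` to the bottom. -/
def lower (p : SPref N) (T : N → Prop) : SPref N where
  strict u v := (T v ∧ ¬ T u) ∨ ((T u ↔ T v) ∧ p.strict u v)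
  total x y := by
    have := p.total x y
    tauto
  irrefl x := by
    have := p.irrefl x
    tauto
  trans x y z := by
    have := p.trans x y z
    tauto

/-- Total number of acceptable objects. -/
noncomputable def msize [Fintype N] (P : N → SPref N) : ℕ :=
  ∑ i, (Finset.univ.filter fun o => (P i).weak o i).card

theorem main_uniq [Fintype N] [DecidableEq N]
    (φ : (N → SPref N) → N → N) (hb : ∀ P, Function.Bijective (φ P))
    (hPE : PE1 φ) (hIR : IR1 φ) (hTP : TP1 φ) :
    ∀ n, ∀ P : N → SPref N, msize P = n → ∀ x r, Valid P x r → ∀ i, φ P i = x i := by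
  intro n
  induction n using Nat.strong_induction_on with
  | _ n IH =>
  intro P hn x r hv
  have hA : ∀ i, (P i).strict (x i) (φ P i) → φ P i = i := by
    intro i hs
    by_contra hne
    obtain ⟨T, hT⟩ : ∃ T : N → Prop, T = fun o => o ≠ i ∧ (P i).weak (φ P i) o := ⟨_, rfl⟩
    have hTi : ¬ T i := by rw [hT]; simp
    have hTy : T (φ P i) := by rw [hT]; exact ⟨hne, Or.inr rfl⟩
    have hTx : ¬ T (x i) := by
      rw [hT]; exact fun h => (P i).not_both hs h.2
    have htr : Trunc1 i (P i) (lower (P i) T) := by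
      refine ⟨φ P i, ?_, ?_, ?_⟩
      · intro u v hu hv
        have hu' : T u := by rw [hT]; exact hu
        have hv' : T v := by rw [hT]; exact hv
        simp [lower, hu', hv']
      · intro u v hu hv
        have hu' : ¬ T u := by rw [hT]; exact hu
        have hv' : ¬ T v := by rw [hT]; exact hv
        simp [lower, hu', hv']
      · intro u v hu hv
        have hu' : T u := by rw [hT]; exact hu
        have hv' : ¬ T v := by rw [hT]; exact hv
        simp [lower, hu', hv']
    have hv' : Valid (Function.update P i (lower (P i) T)) x r := by
      refine ⟨hv.inj, hv.lay, fun j o ho => ?_⟩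
      have h1 := hv.top j o ho
      by_cases hji : j = i
      · subst hji
        rw [Function.update_self]
        rcases h1 with h1 | h1
        · left
          change (T o ∧ ¬ T (x j)) ∨ ((T (x j) ↔ T o) ∧ (P j).strict (x j) o)
          tauto
        · exact Or.inr h1
      · rw [Function.update_of_ne hji]; exact h1
    have hlt : msize (Function.update P i (lower (P i) T)) < n := by
      rw [← hn]
      have hsub : ∀ o, (lower (P i) T).weak o i → (P i).weak o i := by
        intro o ho
        rcases ho with ho | ho
        · change (T i ∧ ¬ T o) ∨ ((T o ↔ T i) ∧ (P i).strict o i) at ho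
          left; tauto
        · exact Or.inr ho
      unfold msize
      refine Finset.sum_lt_sum (fun j _ => ?_) ⟨i, Finset.mem_univ _, ?_⟩
      · apply Finset.card_le_card
        intro o
        simp only [Finset.mem_filter, Finset.mem_univ, true_and]
        by_cases hji : j = i
        · subst hji; rw [Function.update_self]; exact hsub o
        · rw [Function.update_of_ne hji]; exact id
      · apply Finset.card_lt_card
        rw [Finset.ssubset_iff_of_subset]
        · refine ⟨φ P i, ?_, ?_⟩
          · simpa using hIR P i
          · simp only [Finset.mem_filter, Finset.mem_univ, true_and, Function.update_self]
            rintro (ho | ho)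
            · change (T i ∧ ¬ T (φ P i)) ∨ ((T (φ P i) ↔ T i) ∧ (P i).strict (φ P i) i) at ho
              tauto
            · exact hne ho
        · intro o
          simp only [Finset.mem_filter, Finset.mem_univ, true_and, Function.update_self]
          exact hsub o
    have h2 := IH _ hlt _ rfl x r hv' i
    have h3 := hTP P i _ htr
    rw [h2] at h3
    exact (P i).not_both hs h3
  obtain ⟨y, hy⟩ : ∃ y, y = φ P := ⟨_, rfl⟩
  have hyb : Function.Bijective y := hy ▸ hb P
  rw [← hy] at hA ⊢
  by_contra hcon
  push Not at hcon
  obtain ⟨i0, hi0⟩ := hcon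
  have hex : ∃ k, ∃ i, y i ≠ x i ∧ r i = k := ⟨_, i0, hi0, rfl⟩
  obtain ⟨k, hkdef⟩ : ∃ k, k = Nat.find hex := ⟨_, rfl⟩
  obtain ⟨i, hine, hik⟩ : ∃ i, y i ≠ x i ∧ r i = k := hkdef ▸ Nat.find_spec hex
  have hmin : ∀ j, r j < k → y j = x j := by
    intro j hj
    by_contra h
    exact Nat.find_min hex (m := r j) (by omega) ⟨j, h, rfl⟩
  have hw : ∀ j, r j = k → (P j).weak (x j) (y j) := fun j hj =>
    hv.top j _ (by rw [hj]; exact hv.above hyb.1 hmin hj.ge)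
  have hown : ∀ j, r j = k → y j ≠ x j → y j = j := fun j hj hne => by
    rcases hw j hj with h | h
    · exact hA j h
    · exact absurd h.symm hne
  obtain ⟨D, hD⟩ : ∃ D : Finset N, D = Finset.univ.filter fun j => r j = k ∧ y j = j := ⟨_, rfl⟩
  have hmD : ∀ j, j ∈ D ↔ r j = k ∧ y j = j := by intro j; rw [hD]; simp
  have hDsub : D ⊆ D.image x := by
    intro j hj
    have hj' := (hmD j).1 hj
    obtain ⟨l, hl⟩ := (Finite.injective_iff_surjective.1 hv.inj) j
    refine Finset.mem_image.2 ⟨l, (hmD l).2 ⟨?_, ?_⟩, hl⟩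
    · rw [← hv.lay l, hl]; exact hj'.1
    · by_cases hyl : y l = x l
      · have : l = j := hyb.1 (by rw [hyl, hl, hj'.2])
        rw [this]; exact hj'.2
      · exact hown l (by rw [← hv.lay l, hl]; exact hj'.1) hyl
  have hDeq : D = D.image x := Finset.eq_of_subset_of_card_le hDsub Finset.card_image_le
  have hxD : ∀ j ∈ D, x j ∈ D := fun j hj => by
    rw [hDeq]; exact Finset.mem_image_of_mem x hj
  have hyD : ∀ j, j ∉ D → y j ∉ D := fun j hj hyj => by
    have := hyb.1 ((hmD _).1 hyj).2
    rw [this] at hyj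
    exact hj hyj
  have hiD : i ∈ D := (hmD i).2 ⟨hik, hown i hik hine⟩
  refine hPE P (fun j => if j ∈ D then x j else y j) ?_ ⟨?_, i, ?_⟩
  · refine Finite.injective_iff_bijective.1 ?_
    intro a b hab
    by_cases ha : a ∈ D <;> by_cases hb' : b ∈ D <;> simp only [ha, hb', if_true, if_false] at hab
    · exact hv.inj hab
    · exact absurd (hab ▸ hxD a ha) (hyD b hb')
    · exact absurd (hab ▸ hxD b hb') (hyD a ha)
    · exact hyb.1 hab
  · intro j
    rw [← hy]
    by_cases hj : j ∈ D
    · simp only [if_pos hj]; exact hw j ((hmD j).1 hj).1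
    · simp only [if_neg hj]; exact Or.inr rfl
  · rw [← hy]
    simp only [if_pos hiD]
    rcases hw i hik with h | h
    · exact h
    · exact absurd h.symm hine

/-- In the single-object (Shapley–Scarf housing market) environment, a rule
satisfies PE, IR and TP iff it equals the Top Trading Cycles rule. -/
theorem stmt14 {N : Type} [Fintype N] [Nonempty N] [DecidableEq N]
    (hN : 2 ≤ Fintype.card N)
    (φ : (N → SPref N) → N → N) (hb : ∀ P, Function.Bijective (φ P)) :
    (PE1 φ ∧ IR1 φ ∧ TP1 φ) ↔ ∀ P : N → SPref N, ∀ i : N, φ P i = TTC1 P i := by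
  constructor
  · rintro ⟨hPE, hIR, hTP⟩ P i
    obtain ⟨r, hr⟩ := TTC1_valid P
    exact main_uniq φ hb hPE hIR hTP _ P rfl _ r hr i
  · intro h
    have hv : ∀ P, ∃ r, Valid P (φ P) r := fun P => by
      rw [show φ P = TTC1 P from funext (h P)]; exact TTC1_valid P
    refine ⟨?_, ?_, ?_⟩
    · rintro P ν hν ⟨hw, j, hj⟩
      obtain ⟨r, hr⟩ := hv P
      rw [hr.pe hν.1 hw j] at hj
      exact (P j).irrefl _ hj
    · intro P i
      obtain ⟨r, hr⟩ := hv P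
      exact hr.top i i le_rfl
    · intro P i p' _
      obtain ⟨r, hr⟩ := hv P
      obtain ⟨r', hr'⟩ := hv (Function.update P i p')
      refine hr.top i _ (hr.above hr'.inj ?_ le_rfl)
      refine hr.uniq hr' (r i) ?_
      intro j hj
      rw [Function.update_of_ne]
      rintro rfl
      omega

end Housing
end

section
/- For every profile P in the conditionally lexicographic domain 𝒞ℒ, an allocation is individual-good efficient at P if and only if it is Pareto efficient at P. -/
attribute [local instance] Classical.propDecidable

namespace Realloc

variable {N O : Type}

theorem CondLex.mono [DecidableEq O] {p : Pref O} (hp : CondLex p) {X Y : Finset O}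
    (h : X ⊆ Y) : p.weak Y X := by
  induction Y using Finset.induction_on generalizing X with
  | empty => right; exact (Finset.subset_empty.mp h).symm
  | insert a s ha ih =>
    have key : ∀ T : Finset O, a ∉ T → p.strict (insert a T) T := by
      intro T hT
      obtain ⟨x, ⟨hx, hZ⟩, -⟩ := hp {a} T (by simpa using hT) ⟨a, by simp⟩
      have hxa : x = a := by simpa using hx
      subst hxa
      simpa using hZ ∅ (by simp)
    by_cases hX : insert a s = X
    · exact Or.inr hX
    left
    by_cases haX : a ∈ X
    · -- peel another element
      obtain ⟨b, hb, hbX⟩ : ∃ b ∈ insert a s, b ∉ X := by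
        by_contra hcon
        push Not at hcon
        exact hX (Finset.Subset.antisymm hcon h)
      -- use general chain
      have hD : ((insert a s) \ X).Nonempty := ⟨b, by simp [hb, hbX]⟩
      have gen : ∀ D : Finset O, Disjoint D X → D.Nonempty → p.strict (X ∪ D) X := by
        intro D
        induction D using Finset.induction_on with
        | empty => intro _ h; simp at h
        | insert c t hc iht =>
          intro hd _
          have hcX : c ∉ X := fun h' => (Finset.disjoint_left.mp hd) (by simp) h'
          have k2 : p.strict (insert c (X ∪ t)) (X ∪ t) := by
            have hnc : c ∉ X ∪ t := by simp [hcX, hc]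
            obtain ⟨x, ⟨hx, hZ⟩, -⟩ := hp {c} (X ∪ t) (by simpa using hnc) ⟨c, by simp⟩
            have hxa : x = c := by simpa using hx
            subst hxa
            simpa using hZ ∅ (by simp)
          have e : X ∪ insert c t = insert c (X ∪ t) := by grind
          rw [e]
          rcases t.eq_empty_or_nonempty with ht | ht
          · subst ht; simpa using k2
          · exact p.trans _ _ _ k2 (iht (hd.mono_left (by simp)) ht)
      have := gen _ Finset.sdiff_disjoint hD
      rwa [Finset.union_sdiff_of_subset h] at this
    · have hXs : X ⊆ s := by
        intro y hy
        have := h hy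
        grind
      rcases ih hXs with h1 | h1
      · exact p.trans _ _ _ (key s ha) h1
      · rw [← h1]; exact key s ha

theorem Pref.sw {p : Pref O} {X Y Z : Finset O} (h1 : p.weak X Y) (h2 : p.strict Y Z) :
    p.strict X Z := by
  rcases h1 with h | h
  · exact p.trans _ _ _ h h2
  · rw [h]; exact h2

theorem CondLex.exists_target [DecidableEq O] {p : Pref O} (hp : CondLex p) {M V : Finset O}
    (h : p.strict V M) : ∃ x ∈ V, x ∉ M ∧ ∀ o ∈ M, o ∉ V →
      p.strict ((insert x M).erase o) M := by
  have hne : V ≠ M := fun e => p.irrefl _ (e ▸ h)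
  obtain ⟨x, ⟨hx, hZ⟩, -⟩ := hp ((V \ M) ∪ (M \ V)) (M ∩ V)
    (by rw [Finset.disjoint_left]; intro a; simp; tauto)
    (by
      by_contra hcon
      rw [Finset.not_nonempty_iff_eq_empty] at hcon
      apply hne
      ext a
      have : a ∉ (V \ M) ∪ (M \ V) := by simp [hcon]
      simp at this
      tauto)
  have hxV : x ∈ V \ M := by
    by_contra hcon
    have hxM : x ∈ M \ V := by
      rcases Finset.mem_union.mp hx with h' | h'
      · exact absurd h' hcon
      · exact h'
    have h1 := hZ (V \ M) (by grind)
    have e : M ∩ V ∪ V \ M = V := by grind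
    rw [e] at h1
    have h2 : p.weak M (insert x (M ∩ V)) := hp.mono (by grind)
    exact p.irrefl _ (p.trans _ _ _ (Pref.sw h2 h1) h)
  refine ⟨x, by grind, by grind, fun o ho hoV => ?_⟩
  have h1 := hZ (M \ V) (by grind)
  have e : M ∩ V ∪ M \ V = M := by grind
  rw [e] at h1
  exact Pref.sw (hp.mono (by grind)) h1

theorem pe_ige [DecidableEq O] (P : N → Pref O) (hP : ∀ i, CondLex (P i))
    (μ : Allocation N O) (h : ParetoEffAt P μ.bundle) : IGEat P μ.bundle := by
  rintro ⟨k, obj, ag, hobj, hag, hmem, hst⟩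
  let nb : N → Finset O := fun i =>
    if hi : ∃ l, ag l = i then
      (insert (obj (hi.choose + 1)) (μ.bundle i)).erase (obj hi.choose) else μ.bundle i
  have nb1 : ∀ l, nb (ag l) = (insert (obj (l + 1)) (μ.bundle (ag l))).erase (obj l) := by
    intro l
    have hi : ∃ l', ag l' = ag l := ⟨l, rfl⟩
    have : hi.choose = l := hag hi.choose_spec
    simp only [nb, dif_pos hi, this]
  have nb2 : ∀ i, (∀ l, ag l ≠ i) → nb i = μ.bundle i := by
    intro i hi
    have : ¬ ∃ l, ag l = i := by push Not; exact hi
    simp only [nb, dif_neg this]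
  have own : ∀ l i, obj l ∈ μ.bundle i → i = ag l := by
    intro l i hi
    by_contra hne
    exact μ.disj i (ag l) hne _ hi (hmem l)
  have hk : ∀ l : Fin (k+1), obj (l + 1) ≠ obj l := by
    intro l hl
    have h1 := hst l
    rw [hl] at h1
    have h2 : (P (ag l)).weak (μ.bundle (ag l)) ((insert (obj l) (μ.bundle (ag l))).erase (obj l)) :=
      (hP _).mono (by have := hmem l; grind)
    exact (P (ag l)).irrefl _ (Pref.sw h2 h1)
  -- membership characterisation
  have c1 : ∀ l i, obj (l + 1) ∈ nb i ↔ i = ag l := by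
    intro l i
    by_cases hi : ∃ l', ag l' = i
    · obtain ⟨l', rfl⟩ := hi
      rw [nb1]
      constructor
      · intro hm
        rw [Finset.mem_erase, Finset.mem_insert] at hm
        rcases hm.2 with h3 | h3
        · rw [add_right_cancel (hobj h3)]
        · exact absurd (congrArg obj (hag (own _ _ h3))).symm hm.1
      · intro hm
        rw [hag hm]
        simp [hk l]
    · push Not at hi
      rw [nb2 i hi]
      constructor
      · intro hm
        exact absurd (own _ _ hm).symm (hi _)
      · intro hm; exact absurd hm.symm (hi l)
  have c2 : ∀ o, (∀ l, obj l ≠ o) → ∀ i, o ∈ nb i ↔ o ∈ μ.bundle i := by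
    intro o ho i
    by_cases hi : ∃ l', ag l' = i
    · obtain ⟨l', rfl⟩ := hi
      rw [nb1, Finset.mem_erase, Finset.mem_insert]
      have := ho l'
      have := ho (l'+1)
      grind
    · push Not at hi
      rw [nb2 i hi]
  have c3 : ∀ o, (∃ l, obj (l+1) = o) ∨ ∀ l, obj l ≠ o := by
    intro o
    by_cases ho : ∃ l, obj l = o
    · obtain ⟨l, hl⟩ := ho
      left
      exact ⟨l - 1, by simpa using hl⟩
    · right; push Not at ho; exact ho
  let ν : Allocation N O :=
    { bundle := nb
      nonempty := by
        intro i
        by_cases hi : ∃ l', ag l' = i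
        · obtain ⟨l', rfl⟩ := hi
          exact ⟨_, (c1 l' _).2 rfl⟩
        · push Not at hi
          rw [nb2 i hi]
          exact μ.nonempty i
      disj := by
        intro i j hij o hi hj
        rcases c3 o with ⟨l, rfl⟩ | ho
        · rw [c1] at hi hj
          exact hij (hi.trans hj.symm)
        · rw [c2 o ho] at hi hj
          exact μ.disj i j hij o hi hj
      cover := by
        intro o
        rcases c3 o with ⟨l, rfl⟩ | ho
        · exact ⟨_, (c1 l _).2 rfl⟩
        · obtain ⟨i, hi⟩ := μ.cover o
          exact ⟨i, (c2 o ho i).2 hi⟩ }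
  refine h ν ⟨fun i => ?_, ag 0, ?_⟩
  · by_cases hi : ∃ l', ag l' = i
    · obtain ⟨l', rfl⟩ := hi
      left
      change (P (ag l')).strict (nb (ag l')) _
      rw [nb1]; exact hst l'
    · push Not at hi
      right
      exact nb2 i hi
  · change (P (ag 0)).strict (nb (ag 0)) _
    rw [nb1]; exact hst 0

theorem ige_pe [Finite N] [DecidableEq O] (P : N → Pref O) (hP : ∀ i, CondLex (P i))
    (μ : Allocation N O) (h : IGEat P μ.bundle) : ParetoEffAt P μ.bundle := by
  rintro ν ⟨hw, j, hj⟩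
  apply h
  let S := {i : N // (P i).strict (ν.bundle i) (μ.bundle i)}
  have ht : ∀ s : S, ∃ x ∈ ν.bundle s.1, x ∉ μ.bundle s.1 ∧ ∀ o ∈ μ.bundle s.1,
      o ∉ ν.bundle s.1 → (P s.1).strict ((insert x (μ.bundle s.1)).erase o) (μ.bundle s.1) :=
    fun s => (hP s.1).exists_target s.2
  choose x hxν hxμ hx using ht
  have hf : ∀ s : S, ∃ t : S, x s ∈ μ.bundle t.1 ∧ x s ∉ ν.bundle t.1 := by
    intro s
    obtain ⟨t, htm⟩ := μ.cover (x s)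
    have hst : s.1 ≠ t := by
      rintro rfl
      exact hxμ s htm
    have hn := ν.disj _ _ hst _ (hxν s)
    refine ⟨⟨t, ?_⟩, htm, hn⟩
    rcases hw t with h1 | h1
    · exact h1
    · rw [h1] at hn; exact absurd htm hn
  choose f hf1 hf2 using hf
  obtain ⟨a, ha⟩ : ∃ a : S, 0 < Function.minimalPeriod f a := by
    obtain ⟨m, n, hmn, he⟩ := Finite.exists_ne_map_eq_of_infinite
      (fun n : ℕ => f^[n] (⟨j, hj⟩ : S))
    have key : ∀ m n : ℕ, m < n → f^[m] (⟨j, hj⟩ : S) = f^[n] ⟨j, hj⟩ →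
        ∃ a : S, 0 < Function.minimalPeriod f a := by
      intro m n hlt he
      refine ⟨f^[m] ⟨j, hj⟩, Function.IsPeriodicPt.minimalPeriod_pos (n := n - m) (by omega) ?_⟩
      change f^[n - m] (f^[m] _) = _
      rw [← Function.iterate_add_apply, Nat.sub_add_cancel hlt.le, he]
    rcases lt_or_gt_of_ne hmn with h' | h'
    · exact key _ _ h' he
    · exact key _ _ h' he.symm
  obtain ⟨k, hk⟩ : ∃ k, Function.minimalPeriod f a = k + 1 := ⟨_, (Nat.succ_pred_eq_of_pos ha).symm⟩
  let ag : Fin (k + 1) → S := fun l => f^[l.val] a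
  have hag : Function.Injective ag := by
    intro l m hlm
    apply Fin.ext
    exact Function.iterate_injOn_Iio_minimalPeriod (by simp [hk]; omega) (by simp [hk]; omega) hlm
  have hnext : ∀ l, f (ag l) = ag (l + 1) := by
    intro l
    simp only [ag]
    rw [← Function.iterate_succ_apply' f, Fin.val_add,
      ← Function.iterate_mod_minimalPeriod_eq (n := l.val.succ), hk]
    simp
  have hprev : ∀ l, f (ag (l - 1)) = ag l := fun l => by rw [hnext]; simp
  have hown : ∀ l, x (ag (l - 1)) ∈ μ.bundle (ag l).1 := fun l => by
    have := hf1 (ag (l - 1)); rwa [hprev] at this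
  have hown2 : ∀ l, x (ag (l - 1)) ∉ ν.bundle (ag l).1 := fun l => by
    have := hf2 (ag (l - 1)); rwa [hprev] at this
  refine ⟨k, fun l => x (ag (l - 1)), fun l => (ag l).1, ?_, ?_, hown, ?_⟩
  · intro l m hlm
    by_contra hne
    have h1 := hown l
    have hlm' : x (ag (l - 1)) = x (ag (m - 1)) := hlm
    rw [hlm'] at h1
    exact μ.disj _ _ (fun e => hne (hag (Subtype.ext e))) _ h1 (hown m)
  · intro l m hlm
    exact hag (Subtype.ext hlm)
  · intro l
    have := hx (ag l) _ (hown l) (hown2 l)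
    simpa using this

/-- On the conditionally lexicographic domain, an allocation is
individual-good efficient iff it is Pareto efficient. -/
theorem stmt15 {N O : Type} [Fintype N] [Fintype O] [DecidableEq N] [DecidableEq O]
    (hN : 2 ≤ Fintype.card N) (hNO : Fintype.card N ≤ Fintype.card O) :
    ∀ P : N → Pref O, (∀ i, CondLex (P i)) → ∀ μ : Allocation N O,
      (IGEat P μ.bundle ↔ ParetoEffAt P μ.bundle) := by
  intro P hP μ
  exact ⟨ige_pe P hP μ, pe_ige P hP μ⟩

end Realloc
end

section
/- Within the domain of monotonic preferences, the conditionally lexicographic domain is a maximal domain on which individual-good efficiency and Pareto efficiency are equivalent: for every finite set O of objects and every strict preference P_1 on 2^O that is monotonic but not conditionally lexicographic, there exist a finite set N of agents containing agent 1 (with 2 ≤ |N| ≤ 3 and |O| ≥ |N|), lexicographic preferences P_j on 2^O for every agent j ∈ N ∖ {1}, and an allocation μ such that μ is individual-good efficient at the profile P = (P_j)_{j ∈ N} but not Pareto efficient at P. -/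
attribute [local instance] Classical.propDecidable

namespace Realloc

variable {N O : Type}

theorem aux_asymm (p : Pref O) {X Y : Finset O} (h : p.strict X Y) (h' : p.strict Y X) : False :=
  p.irrefl X (p.trans _ _ _ h h')

/-- Lexicographic preference built from an injective rank. -/
theorem aux_lexPref [DecidableEq O] (f : O ↪ ℕ) :
    ∃ q : Pref O, Lexicographic q ∧ ∀ x y, f x < f y → q.strict {y} {x} := by
  let q : Pref O :=
    { strict := fun X Y => toColex (Y.map f) < toColex (X.map f)
      total := by
        intro X Y
        rcases lt_trichotomy (toColex (Y.map f)) (toColex (X.map f)) with h | h | h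
        · exact Or.inl h
        · right; left
          exact (Finset.map_injective f (toColex_inj.mp h)).symm
        · exact Or.inr (Or.inr h)
      irrefl := fun X => lt_irrefl _
      trans := fun X Y Z h1 h2 => lt_trans h2 h1 }
  have hs : ∀ X Y : Finset O, q.strict X Y ↔ ∃ a ∈ X, a ∉ Y ∧ ∀ b ∈ Y, b ∉ X → f b < f a := by
    intro X Y
    show toColex (Y.map f) < toColex (X.map f) ↔ _
    rw [Finset.Colex.toColex_lt_toColex_iff_exists_forall_lt]
    simp
  have h1 : ∀ x y, f x < f y → q.strict {y} {x} := by
    intro x y h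
    rw [hs]
    refine ⟨y, by simp, ?_, ?_⟩
    · simp only [Finset.mem_singleton]; rintro rfl; exact lt_irrefl _ h
    · intro b hb _
      rw [Finset.mem_singleton] at hb; subst hb; exact h
  refine ⟨q, ?_, h1⟩
  intro X Y hXY
  have hne : ((X \ Y) ∪ (Y \ X)).Nonempty := by
    by_contra hc
    rw [Finset.not_nonempty_iff_eq_empty, Finset.union_eq_empty] at hc
    exact hXY (Finset.Subset.antisymm (Finset.sdiff_eq_empty_iff_subset.mp hc.1)
      (Finset.sdiff_eq_empty_iff_subset.mp hc.2))
  constructor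
  · intro h
    obtain ⟨m, hm, hmax⟩ := Finset.exists_max_image _ f hne
    obtain ⟨a, haX, haY, ha⟩ := (hs X Y).1 h
    refine ⟨m, ?_, ?_⟩
    · rcases Finset.mem_union.1 hm with hm | hm
      · exact hm
      · exfalso
        rw [Finset.mem_sdiff] at hm
        have := ha m hm.1 hm.2
        have := hmax a (by simp [haX, haY])
        omega
    · intro y hy hym
      exact h1 _ _ (lt_of_le_of_ne (hmax y hy) (fun h => hym (f.injective h)))
  · rintro ⟨x, hx, hxy⟩
    rw [Finset.mem_sdiff] at hx
    rw [hs]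
    refine ⟨x, hx.1, hx.2, ?_⟩
    intro b hbY hbX
    have hbx : b ≠ x := by rintro rfl; exact hbX hx.1
    have h2 := hxy b (by simp [hbY, hbX]) hbx
    by_contra hc
    have : f x < f b := lt_of_le_of_ne (not_lt.1 hc) (fun h => hbx (f.injective h).symm)
    exact aux_asymm q h2 (h1 _ _ this)

theorem aux_lexTier [Fintype O] [DecidableEq O] (t : O → ℕ) :
    ∃ q : Pref O, Lexicographic q ∧ ∀ x y, t x < t y → q.strict {y} {x} := by
  let e := Fintype.equivFin O
  have key : ∀ x y : O, t x < t y →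
      t x * Fintype.card O + (e x : ℕ) < t y * Fintype.card O + (e y : ℕ) := by
    intro x y h
    have := (e x).isLt
    have : (t x + 1) * Fintype.card O ≤ t y * Fintype.card O := Nat.mul_le_mul_right _ h
    rw [add_mul] at this
    omega
  let f : O ↪ ℕ := ⟨fun o => t o * Fintype.card O + (e o : ℕ), by
    intro x y h
    dsimp only at h
    rcases lt_trichotomy (t x) (t y) with h' | h' | h'
    · have := key x y h'; omega
    · rw [h'] at h
      exact e.injective (Fin.ext (by omega))
    · have := key y x h'; omega⟩
  obtain ⟨q, h1, h2⟩ := aux_lexPref f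
  exact ⟨q, h1, fun x y h => h2 x y (key x y h)⟩

theorem aux_lexSwap [DecidableEq O] {q : Pref O} (hq : Lexicographic q) {W : Finset O} {a b : O}
    (ha : a ∉ W) (hb : b ∈ W) (h : q.strict ((insert a W).erase b) W) : q.strict {a} {b} := by
  have hne : (insert a W).erase b ≠ W := by
    intro he; rw [← he] at hb; simp at hb
  obtain ⟨x, hx, hxy⟩ := (hq _ _ hne).1 h
  have hxa : x = a := by
    simp only [Finset.mem_sdiff, Finset.mem_erase, Finset.mem_insert] at hx
    tauto
  subst hxa
  apply hxy b
  · simp [hb]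
  · rintro rfl; exact ha hb

theorem aux_best [DecidableEq O] (p : Pref O) (Y X : Finset O) (hX : X.Nonempty) :
    ∃ x ∈ X, ∀ b ∈ X, ¬ p.strict (insert b Y) (insert x Y) := by
  induction hX using Finset.Nonempty.cons_induction with
  | singleton a =>
    refine ⟨a, by simp, ?_⟩
    intro b hb
    rw [Finset.mem_singleton] at hb; subst hb; exact p.irrefl _
  | cons a s ha hs ih =>
    obtain ⟨x, hx, hb⟩ := ih
    by_cases h : p.strict (insert a Y) (insert x Y)
    · refine ⟨a, by simp, ?_⟩
      intro b hbs hc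
      rcases Finset.mem_cons.1 hbs with rfl | hbs
      · exact p.irrefl _ hc
      · exact hb b hbs (p.trans _ _ _ hc h)
    · refine ⟨x, by simp [hx], ?_⟩
      intro b hbs
      rcases Finset.mem_cons.1 hbs with rfl | hbs
      · exact h
      · exact hb b hbs

theorem aux_notCL [DecidableEq O] (p : Pref O) (hmono : Monot p) (h : ¬ CondLex p) :
    ∃ X Y : Finset O, Disjoint X Y ∧ X.Nonempty ∧
      ∀ x ∈ X, (X.erase x).Nonempty ∧ p.strict (Y ∪ X.erase x) (insert x Y) := by
  unfold CondLex at h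
  push Not at h
  obtain ⟨X, Y, hd, hX, hu⟩ := h
  refine ⟨X, Y, hd, hX, ?_⟩
  intro x hx
  by_contra hcon
  apply hu
  have hxY : x ∉ Y := Finset.disjoint_left.1 hd hx
  have hne : insert x Y ≠ Y ∪ X.erase x := by
    intro he
    have : x ∈ Y ∪ X.erase x := by rw [← he]; simp
    simp [hxY] at this
  have h1 : p.strict (insert x Y) (Y ∪ X.erase x) := by
    rcases p.total (insert x Y) (Y ∪ X.erase x) with h | h | h
    · exact h
    · exact absurd h hne
    · by_cases hn : (X.erase x).Nonempty
      · exact absurd ⟨hn, h⟩ hcon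
      · rw [Finset.not_nonempty_iff_eq_empty] at hn
        rcases hmono (insert x Y) (Y ∪ X.erase x) (by rw [hn]; simp) with h | h
        · exact h
        · exact absurd h hne
  have h2 : ∀ Z : Finset O, Z ⊆ X.erase x → p.strict (insert x Y) (Y ∪ Z) := by
    intro Z hZ
    rcases hmono (Y ∪ X.erase x) (Y ∪ Z) (Finset.union_subset_union_right hZ) with h | h
    · exact p.trans _ _ _ h1 h
    · rw [← h]; exact h1
  refine ⟨x, ⟨hx, h2⟩, ?_⟩
  rintro x' ⟨hx', h'⟩
  by_contra hxx
  have e1 := h2 {x'} (by simp [hx', hxx])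
  have e2 := h' {x} (by simp [hx, Ne.symm hxx])
  rw [Finset.union_comm, ← Finset.insert_eq] at e1 e2
  exact aux_asymm p e1 e2

/-- Two-agent allocation from a set and its complement. -/
def auxAlloc [Fintype O] [DecidableEq O] (A : Finset O) (h1 : A.Nonempty) (h2 : Aᶜ.Nonempty) :
    Allocation (Fin 2) O where
  bundle := ![A, Aᶜ]
  nonempty := by
    intro i
    fin_cases i
    · exact h1
    · exact h2
  disj := by
    intro i j hij o
    fin_cases i <;> fin_cases j <;> simp_all
  cover := by
    intro o
    by_cases h : o ∈ A
    · exact ⟨0, h⟩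
    · exact ⟨1, by simpa using h⟩

/-- Within monotonic preferences, the conditionally lexicographic domain is
a maximal domain on which IGE and PE are equivalent: for any monotonic but not
conditionally lexicographic preference `p₁` there are a society of 2 or 3 agents
(the number of agents is `m + 2 ∈ {2, 3}` and agent 1 is encoded as `0 : Fin (m + 2)`),
lexicographic preferences for the other agents, and an
allocation that is individual-good efficient but not Pareto efficient. -/
theorem stmt18 {O : Type} [Fintype O] [DecidableEq O]
    (p₁ : Pref O) (hmono : Monot p₁) (hnotCL : ¬ CondLex p₁) :
    ∃ m : ℕ, m ≤ 1 ∧ m + 2 ≤ Fintype.card O ∧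
      ∃ P : Fin (m + 2) → Pref O, P 0 = p₁ ∧
        (∀ j : Fin (m + 2), j ≠ 0 → Lexicographic (P j)) ∧
        ∃ μ : Allocation (Fin (m + 2)) O, IGEat P μ.bundle ∧ ¬ ParetoEffAt P μ.bundle := by
  obtain ⟨X, Y, hd, hX, hXY⟩ := aux_notCL p₁ hmono hnotCL
  obtain ⟨x, hx, hbest⟩ := aux_best p₁ Y X hX
  obtain ⟨hne, hstr⟩ := hXY x hx
  have hxY : x ∉ Y := Finset.disjoint_left.1 hd hx
  obtain ⟨z, hz⟩ := hne
  have hzx : z ≠ x := Finset.ne_of_mem_erase hz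
  have hzX : z ∈ X := Finset.mem_of_mem_erase hz
  have hzY : z ∉ Y := Finset.disjoint_left.1 hd hzX
  obtain ⟨q, hq, hqt⟩ := aux_lexTier
    (fun o => if o ∈ Y then 0 else if o = x then 2 else if o ∈ X then 1 else 3)
  have hA1 : (insert x Y).Nonempty := ⟨x, by simp⟩
  have hA2 : ((insert x Y)ᶜ).Nonempty := ⟨z, by simp [hzx, hzY]⟩
  have hB1 : (Y ∪ X.erase x).Nonempty := ⟨z, by simp [hzx, hzX]⟩
  have hB2 : ((Y ∪ X.erase x)ᶜ).Nonempty := ⟨x, by simp [hxY]⟩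
  have hswap : ∀ a ∈ insert x Y, ∀ b ∈ (insert x Y)ᶜ,
      q.strict ((insert a (insert x Y)ᶜ).erase b) (insert x Y)ᶜ →
      p₁.strict ((insert b (insert x Y)).erase a) (insert x Y) → False := by
    intro a ha b hb h1 h2
    have h3 := aux_lexSwap hq (fun h => Finset.mem_compl.1 h ha) hb h1
    rw [Finset.mem_compl, Finset.mem_insert, not_or] at hb
    obtain ⟨hbx, hbY⟩ := hb
    by_cases haY : a ∈ Y
    · refine aux_asymm q h3 (hqt a b ?_)
      simp only [haY, hbY, hbx, if_true, if_false]
      split_ifs <;> omega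
    · have hax : a = x := by
        rcases Finset.mem_insert.1 ha with h | h
        · exact h
        · exact absurd h haY
      subst hax
      by_cases hbX : b ∈ X
      · apply hbest b hbX
        have he : (insert b (insert a Y)).erase a = insert b Y := by
          ext o
          simp only [Finset.mem_erase, Finset.mem_insert]
          constructor
          · tauto
          · rintro (rfl | h)
            · exact ⟨hbx, Or.inl rfl⟩
            · exact ⟨fun h' => haY (h' ▸ h), Or.inr (Or.inr h)⟩
        rwa [he] at h2
      · refine aux_asymm q h3 (hqt a b ?_)
        simp [haY, hbY, hbx, hbX]
  refine ⟨0, by omega, ?_, ![p₁, q], rfl, ?_, auxAlloc (insert x Y) hA1 hA2, ?_, ?_⟩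
  · have : ({z, x} : Finset O).card = 2 := Finset.card_pair hzx
    rw [zero_add, ← this]
    exact Finset.card_le_univ _
  · intro j hj
    fin_cases j
    · exact absurd rfl hj
    · exact hq
  · rintro ⟨k, obj, ag, hobj, hag, hmem, himp⟩
    have hk : k ≤ 1 := by
      have := Fintype.card_le_of_injective ag hag
      simp at this
      omega
    have hcase : k = 0 ∨ k = 1 := by omega
    rcases hcase with rfl | rfl
    · have h1 := hmem 0
      have h2 := himp 0
      rw [show (0 : Fin (0 + 1)) + 1 = 0 from rfl, Finset.insert_eq_of_mem h1] at h2
      have hag0 : ag 0 = 0 ∨ ag 0 = 1 := by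
        generalize ag 0 = i
        fin_cases i <;> simp
      rcases hag0 with h0 | h0 <;> rw [h0] at h1 h2
      · rcases hmono _ _ (Finset.erase_subset (obj 0) ((auxAlloc (insert x Y) hA1 hA2).bundle 0))
          with h | h
        · exact aux_asymm p₁ h h2
        · rw [← h] at h2
          exact p₁.irrefl _ h2
      · have hne2 : ((auxAlloc (insert x Y) hA1 hA2).bundle 1).erase (obj 0) ≠
            (auxAlloc (insert x Y) hA1 hA2).bundle 1 := by
          intro he
          rw [← he] at h1
          simp at h1
        obtain ⟨w, hw, -⟩ := (hq _ _ hne2).1 h2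
        simp at hw
        exact hw.2 hw.1.2
    · have hag0 : (ag 0 = 0 ∧ ag 1 = 1) ∨ (ag 0 = 1 ∧ ag 1 = 0) := by
        have hn : ag 0 ≠ ag 1 := fun h => absurd (hag h) (by decide)
        revert hn
        generalize ag 0 = i
        generalize ag 1 = j
        fin_cases i <;> fin_cases j <;> simp
      have m0 := hmem 0
      have m1 := hmem 1
      have i0 := himp 0
      have i1 := himp 1
      rw [show (0 : Fin (1 + 1)) + 1 = 1 from rfl] at i0
      rw [show (1 : Fin (1 + 1)) + 1 = 0 from rfl] at i1
      rcases hag0 with ⟨h0, h1⟩ | ⟨h0, h1⟩ <;> rw [h0] at m0 i0 <;> rw [h1] at m1 i1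
      · exact hswap (obj 0) m0 (obj 1) m1 i1 i0
      · exact hswap (obj 1) m1 (obj 0) m0 i0 i1
  · intro hpe
    have hq2 : q.strict (Y ∪ X.erase x)ᶜ (insert x Y)ᶜ := by
      have hxm : x ∈ (Y ∪ X.erase x)ᶜ \ (insert x Y)ᶜ := by simp [hxY]
      have hne3 : (Y ∪ X.erase x)ᶜ ≠ (insert x Y)ᶜ := by
        intro he
        rw [he] at hxm
        simp at hxm
      rw [hq _ _ hne3]
      refine ⟨x, hxm, ?_⟩
      intro y hy hyx
      apply hqt
      have hyX : y ∉ Y ∧ y ∈ X := by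
        simp only [Finset.mem_union, Finset.mem_sdiff, Finset.mem_compl, Finset.mem_erase,
          Finset.mem_insert] at hy
        tauto
      simp [hyX.1, hyX.2, hyx, hxY]
    refine hpe (auxAlloc (Y ∪ X.erase x) hB1 hB2) ⟨?_, 0, hstr⟩
    intro i
    fin_cases i
    · exact Or.inl hstr
    · exact Or.inl hq2

end Realloc
end
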